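/- There exist constants b > 0 and C > 0 such that for every positive integer k divisible by 4 and every real x ≥ 16 with log k ≤ b·√(log x), one has Σ_{p ≤ x, p prime, p ≡ 1 (mod 4)} |cos(k·θ_p)| / p ≤ (1/π)·log log x + (1 − 2/π)·log log k + C. -/

import Mathlib

/-!
Expanding `|cos|` in its Fourier series reduces the sum to `2 / π` times the sum of `1 / p` plus the
oscillating sums with `cos (l θ_p)` for `l = 2 |n| k`, weighted by `O(1 / n ^ 2)`. The latter are
governed by the Hecke `L`-functions of `ℤ[i]` with angular characters `z ↦ (z / |z|) ^ l`, `4 ∣ l`.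

The lattice sum `∑ (z / |z|) ^ l |z| ^ (-2 s)` continues to the left of `s = 1`: the integral of the
same function vanishes by rotation, and subtracting it cell by cell gains a factor `l / |z|`. This
gives a bound polynomial in `l`, so Landau's local formula expresses `-L'/L` near `s = 1` through
the nearby zeros, up to `O(log l)`. Comparing the frequencies `0`, `l`, `2 l` by means of
`3 + 4 cos θ + cos 2θ ≥ 0` shows that those zeros contribute only `O(log l)` themselves, so that
`∑ cos (l θ_p) log p / p ^ (1 + u) = O(log l)` uniformly in small `u > 0`. Integrating in `u` from
`1 / log x` to a multiple of `1 / log k` bounds the contribution of the primes with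
`log p ≫ log k`, and the smaller primes are estimated trivially.
-/

namespace GaussianPrimeAngle

open Complex Filter MeasureTheory Metric Set Topology

section LocalZeros

variable {f G : ℂ → ℂ} {c : ℂ} {R B M : ℝ}

theorem norm_deriv_le_of_re_le (hR : 0 < R) (hM : 0 < M)
    (hf : DifferentiableOn ℂ f (ball c (2 * R))) (hfc : f c = 0)
    (hre : ∀ s ∈ ball c (2 * R), (f s).re ≤ M) {s : ℂ} (hs : s ∈ closedBall c R) :
    ‖deriv f s‖ ≤ 12 * M / R := by
  have norm_le : ∀ z ∈ closedBall c (3 / 2 * R), ‖f z‖ ≤ 6 * M := by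
    intro z hz
    rw [mem_closedBall, dist_eq_norm] at hz
    have shift : MapsTo (fun w ↦ c + w) (ball 0 (2 * R)) (ball c (2 * R)) := fun w hw ↦ by
      simpa using hw
    have hbc := borelCaratheodory_zero (f := fun w ↦ f (c + w)) (z := z - c) hM
      (hf.comp (by fun_prop) shift) (fun w hw ↦ hre _ (shift hw)) (by positivity)
      (by rw [mem_ball_zero_iff]; linarith) (by simpa using hfc)
    rw [add_sub_cancel] at hbc
    refine hbc.trans ?_
    rw [div_le_iff₀ (by linarith)]
    nlinarith
  have hsub : closedBall s (R / 2) ⊆ closedBall c (3 / 2 * R) :=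
    closedBall_subset_closedBall' (by rw [mem_closedBall] at hs; linarith)
  have hd : DiffContOnCl ℂ f (ball s (R / 2)) := by
    refine (hf.mono (hsub.trans (closedBall_subset_ball (by linarith)))).diffContOnCl_ball ?_
    exact Subset.rfl
  refine (norm_deriv_le_of_forall_mem_sphere_norm_le (C := 6 * M) (by positivity) hd
    fun z hz ↦ norm_le z (hsub (sphere_subset_closedBall hz))).trans_eq ?_
  field_simp
  norm_num

theorem exists_eqOn_exp_of_ne_zero (hf : DifferentiableOn ℂ f (ball c R))
    (hne : ∀ s ∈ ball c R, f s ≠ 0) (hR : 0 < R) :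
    ∃ L : ℂ → ℂ, L c = 0 ∧ DifferentiableOn ℂ L (ball c R) ∧
      (∀ s ∈ ball c R, deriv L s = logDeriv f s) ∧ ∀ s ∈ ball c R, f s = f c * exp (L s) := by
  obtain ⟨L, hLc, hL⟩ :=
    (((hf.deriv isOpen_ball).div hf hne).isExactOn_ball).with_val_at c 0
  have hLd : DifferentiableOn ℂ L (ball c R) :=
    fun s hs ↦ (hL s hs).differentiableAt.differentiableWithinAt
  have hlog : EqOn (logDeriv f) (logDeriv fun s ↦ exp (L s)) (ball c R) := fun s hs ↦ by
    simp [logDeriv_apply, (hL s hs).cexp.deriv]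
  obtain ⟨a, -, ha⟩ := (logDeriv_eqOn_iff hf hLd.cexp isOpen_ball
    (convex_ball c R).isPreconnected (fun _ _ ↦ exp_ne_zero _) hne).mp hlog
  have hac : f c = a := by simpa [hLc] using ha (mem_ball_self hR)
  exact ⟨L, hLc, hLd, fun s hs ↦ (hL s hs).deriv, fun s hs ↦ by simpa [hac] using ha hs⟩

theorem norm_logDeriv_le_of_ne_zero (hR : 0 < R) (hM : 0 < M)
    (hf : DifferentiableOn ℂ f (ball c (2 * R))) (hne : ∀ s ∈ ball c (2 * R), f s ≠ 0)
    (hb : ∀ s ∈ ball c (2 * R), ‖f s‖ ≤ Real.exp M * ‖f c‖) {s : ℂ} (hs : s ∈ closedBall c R) :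
    ‖logDeriv f s‖ ≤ 12 * M / R := by
  obtain ⟨L, hLc, hLd, hL', hfL⟩ := exists_eqOn_exp_of_ne_zero hf hne (by positivity)
  rw [← hL' s (closedBall_subset_ball (by linarith) hs)]
  refine norm_deriv_le_of_re_le hR hM hLd hLc (fun z hz ↦ ?_) hs
  have hz' := hb z hz
  rw [hfL z hz, norm_mul, norm_exp, mul_comm] at hz'
  have hc : 0 < ‖f c‖ := norm_pos_iff.mpr (hne c (mem_ball_self (by positivity)))
  exact Real.exp_le_exp.mp (le_of_mul_le_mul_right hz' hc)

theorem eq_sub_mul_dslope {ρ : ℂ} (hρ : G ρ = 0) (s : ℂ) : G s = (s - ρ) * dslope G ρ s := by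
  simpa [hρ] using (sub_smul_dslope G ρ s).symm

theorem norm_dslope_le_of_zero (hR : 0 < R) (hG : DifferentiableOn ℂ G (ball c (6 * R)))
    (hB : ∀ s ∈ closedBall c (5 * R), ‖G s‖ ≤ B * ‖G c‖) (hB0 : 0 ≤ B) {ρ : ℂ}
    (hρ : ρ ∈ closedBall c (2 * R)) (hρ0 : G ρ = 0) :
    ∀ s ∈ closedBall c (5 * R), ‖dslope G ρ s‖ ≤ B * (2 / 3) * ‖dslope G ρ c‖ := by
  intro s hs
  have hcl : closure (ball c (5 * R)) = closedBall c (5 * R) := closure_ball _ (by positivity)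
  have hd : DifferentiableOn ℂ (dslope G ρ) (ball c (6 * R)) :=
    (differentiableOn_dslope (isOpen_ball.mem_nhds
      (closedBall_subset_ball (by linarith) hρ))).mpr hG
  rw [mem_closedBall, dist_eq_norm] at hρ
  refine norm_le_of_forall_mem_frontier_norm_le (U := ball c (5 * R)) isBounded_ball
    (hd.mono (hcl ▸ closedBall_subset_ball (by linarith))).diffContOnCl ?_ (by rwa [hcl])
  intro z hz
  rw [frontier_ball _ (by positivity)] at hz
  have hzρ : 3 * R ≤ ‖z - ρ‖ := by
    have := norm_sub_le_norm_sub_add_norm_sub z ρ c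
    rw [mem_sphere_iff_norm.mp hz] at this
    linarith
  have hle := hB z (sphere_subset_closedBall hz)
  rw [eq_sub_mul_dslope hρ0 z, eq_sub_mul_dslope hρ0 c, norm_mul, norm_mul, norm_sub_rev c] at hle
  have : R * (3 * ‖dslope G ρ z‖) ≤ R * (2 * (B * ‖dslope G ρ c‖)) := by
    calc R * (3 * ‖dslope G ρ z‖) = 3 * R * ‖dslope G ρ z‖ := by ring
      _ ≤ ‖z - ρ‖ * ‖dslope G ρ z‖ := by gcongr
      _ ≤ B * (‖ρ - c‖ * ‖dslope G ρ c‖) := hle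
      _ ≤ B * (2 * R * ‖dslope G ρ c‖) := by gcongr
      _ = R * (2 * (B * ‖dslope G ρ c‖)) := by ring
  linarith [le_of_mul_le_mul_left this hR]

-- Each zero divided out costs a factor `2 / 3` in the bound, so the process stops.
theorem exists_eq_prod_zeros_mul (hR : 0 < R) (n : ℕ) (hG : DifferentiableOn ℂ G (ball c (6 * R)))
    (hc : G c ≠ 0) (hB : ∀ s ∈ closedBall c (5 * R), ‖G s‖ ≤ B * ‖G c‖)
    (hn : B * (2 / 3) ^ n < 1) :
    ∃ (Z : Multiset ℂ) (H : ℂ → ℂ), (∀ ρ ∈ Z, ρ ∈ closedBall c (2 * R) ∧ G ρ = 0) ∧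
      DifferentiableOn ℂ H (ball c (6 * R)) ∧
      (∀ s ∈ closedBall c (5 * R), ‖H s‖ ≤ B * ‖H c‖) ∧
      (∀ s ∈ closedBall c (2 * R), H s ≠ 0) ∧
      ∀ s, G s = (Z.map (s - ·)).prod * H s := by
  have hGpos : 0 < ‖G c‖ := norm_pos_iff.mpr hc
  have hB1 : 1 ≤ B := by
    have := hB c (mem_closedBall_self (by positivity))
    exact le_of_mul_le_mul_right (by simpa using this) hGpos
  induction n generalizing B G with
  | zero => exact absurd hn (by simpa using hB1)
  | succ n ih =>
    by_cases hz : ∀ s ∈ closedBall c (2 * R), G s ≠ 0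
    · exact ⟨0, G, by simp, hG, hB, hz, by simp⟩
    push Not at hz
    obtain ⟨ρ, hρ, hρ0⟩ := hz
    have hfac := eq_sub_mul_dslope hρ0
    have hne : dslope G ρ c ≠ 0 := fun h ↦ hc (by rw [hfac, h, mul_zero])
    have hB' := norm_dslope_le_of_zero hR hG hB (by linarith) hρ hρ0
    have hB1' : 1 ≤ B * (2 / 3) := by
      have := hB' c (mem_closedBall_self (by positivity))
      exact le_of_mul_le_mul_right (by simpa using this) (norm_pos_iff.mpr hne)
    obtain ⟨Z, H, hZ, hH, hHB, hH0, hGH⟩ := ih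
      ((differentiableOn_dslope (isOpen_ball.mem_nhds
        (closedBall_subset_ball (by linarith) hρ))).mpr hG) hne hB'
      (by rw [pow_succ] at hn; linarith) (norm_pos_iff.mpr hne) hB1'
    refine ⟨ρ ::ₘ Z, H, fun r hr ↦ ?_, hH, fun s hs ↦ ?_, hH0, fun s ↦ ?_⟩
    · rcases Multiset.mem_cons.mp hr with rfl | hr
      · exact ⟨hρ, hρ0⟩
      · exact ⟨(hZ r hr).1, by rw [hfac, (hZ r hr).2, mul_zero]⟩
    · refine (hHB s hs).trans ?_
      gcongr
      linarith
    · rw [hfac, hGH, Multiset.map_cons, Multiset.prod_cons, mul_assoc]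

theorem differentiable_multiset_prod_sub (Z : Multiset ℂ) :
    Differentiable ℂ fun z : ℂ ↦ (Z.map (z - ·)).prod := by
  induction Z using Multiset.induction_on with
  | empty => simp
  | cons a Z ih =>
    simp only [Multiset.map_cons, Multiset.prod_cons]
    fun_prop

theorem logDeriv_multiset_prod_sub (Z : Multiset ℂ) {s : ℂ} (h : ∀ ρ ∈ Z, s ≠ ρ) :
    logDeriv (fun z ↦ (Z.map (z - ·)).prod) s = (Z.map fun ρ ↦ 1 / (s - ρ)).sum := by
  induction Z using Multiset.induction_on with
  | empty => simp [logDeriv_apply]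
  | cons a Z ih =>
    have hZ : ∀ ρ ∈ Z, s ≠ ρ := fun ρ hρ ↦ h ρ (Multiset.mem_cons_of_mem hρ)
    have hprod : (Z.map (s - ·)).prod ≠ 0 := by
      simpa [Multiset.prod_eq_zero_iff, sub_eq_zero] using fun hs ↦ hZ s hs rfl
    simp only [Multiset.map_cons, Multiset.prod_cons, Multiset.sum_cons]
    rw [logDeriv_mul (f := fun z ↦ z - a) s (sub_ne_zero.mpr (h a (Multiset.mem_cons_self a Z)))
      hprod (by fun_prop) (differentiable_multiset_prod_sub Z s), ih hZ]
    simp [logDeriv_apply]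

theorem exists_norm_logDeriv_sub_sum_zeros_le (hR : 0 < R) (hM : 0 < M)
    (hG : DifferentiableOn ℂ G (ball c (6 * R))) (hc : G c ≠ 0)
    (hb : ∀ s ∈ closedBall c (5 * R), ‖G s‖ ≤ Real.exp M * ‖G c‖) :
    ∃ Z : Multiset ℂ, (∀ ρ ∈ Z, ρ ∈ closedBall c (2 * R) ∧ G ρ = 0) ∧
      ∀ s ∈ closedBall c R, G s ≠ 0 →
        ‖logDeriv G s - (Z.map fun ρ ↦ 1 / (s - ρ)).sum‖ ≤ 12 * M / R := by
  obtain ⟨n, hn⟩ := exists_pow_lt_of_lt_one (inv_pos.mpr (Real.exp_pos M))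
    (show (2 / 3 : ℝ) < 1 by norm_num)
  obtain ⟨Z, H, hZ, hH, hHB, hH0, hGH⟩ := exists_eq_prod_zeros_mul hR n hG hc hb
    (by simpa using mul_lt_mul_of_pos_left hn (Real.exp_pos M))
  refine ⟨Z, hZ, fun s hs hGs ↦ ?_⟩
  have hne : ∀ ρ ∈ Z, s ≠ ρ := fun ρ hρ h ↦ hGs (h ▸ (hZ ρ hρ).2)
  have hprod : (Z.map (s - ·)).prod ≠ 0 := fun h ↦ hGs (by rw [hGH, h, zero_mul])
  have hHs : DifferentiableAt ℂ H s := hH.differentiableAt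
    (isOpen_ball.mem_nhds (closedBall_subset_ball (by linarith) hs))
  rw [show G = fun z ↦ (Z.map (z - ·)).prod * H z from funext hGH,
    logDeriv_mul s hprod (hH0 s (closedBall_subset_closedBall (by linarith) hs))
      (differentiable_multiset_prod_sub Z s) hHs,
    logDeriv_multiset_prod_sub Z hne, add_sub_cancel_left]
  have hball : ball c (2 * R) ⊆ closedBall c (2 * R) := ball_subset_closedBall
  exact norm_logDeriv_le_of_ne_zero hR hM (hH.mono (ball_subset_ball (by linarith)))
    (fun z hz ↦ hH0 z (hball hz))
    (fun z hz ↦ hHB z (closedBall_subset_closedBall (by linarith) (hball hz))) hs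

end LocalZeros

section PoleSum

/-- The real part of `∑ ρ, 1 / (s - ρ)` at `s = 1 + u`: the contribution of the zeros `ρ ∈ Z` to
the real part of a logarithmic derivative at the point `1 + u` of the real axis. -/
noncomputable def poleSum (Z : Multiset ℂ) (u : ℝ) : ℝ :=
  (Z.map fun ρ ↦ (1 / (((1 + u : ℝ) : ℂ) - ρ)).re).sum

variable {Z : Multiset ℂ} {ρ : ℂ} {u δ : ℝ}

theorem re_sum_one_div_sub (Z : Multiset ℂ) (u : ℝ) :
    ((Z.map fun ρ ↦ 1 / (((1 + u : ℝ) : ℂ) - ρ)).sum).re = poleSum Z u := by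
  simpa [poleSum, Multiset.map_map] using
    map_multiset_sum reAddGroupHom (Z.map fun ρ ↦ 1 / (((1 + u : ℝ) : ℂ) - ρ))

theorem re_one_div_sub_eq (ρ : ℂ) (u : ℝ) : (1 / (((1 + u : ℝ) : ℂ) - ρ)).re =
    (u + (1 - ρ.re)) / ((u + (1 - ρ.re)) ^ 2 + ρ.im ^ 2) := by
  simp only [one_div, inv_re, normSq_apply, sub_re, sub_im, ofReal_re, ofReal_im]
  ring_nf

theorem re_one_div_sub_nonneg (hρ : ρ.re ≤ 1) (hu : 0 ≤ u) :
    0 ≤ (1 / (((1 + u : ℝ) : ℂ) - ρ)).re := by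
  have : 0 ≤ u + (1 - ρ.re) := by linarith
  rw [re_one_div_sub_eq]
  positivity

theorem poleSum_nonneg (hZ : ∀ ρ ∈ Z, ρ.re ≤ 1) (hu : 0 ≤ u) : 0 ≤ poleSum Z u :=
  Multiset.sum_nonneg (Multiset.forall_mem_map_iff.mpr fun ρ hρ ↦
    re_one_div_sub_nonneg (hZ ρ hρ) hu)

theorem re_one_div_sub_le_poleSum (hZ : ∀ ρ ∈ Z, ρ.re ≤ 1) (hu : 0 ≤ u) (hρ : ρ ∈ Z) :
    (1 / (((1 + u : ℝ) : ℂ) - ρ)).re ≤ poleSum Z u :=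
  Multiset.single_le_sum
    (Multiset.forall_mem_map_iff.mpr fun r hr ↦ re_one_div_sub_nonneg (hZ r hr) hu) _
    (Multiset.mem_map_of_mem (fun ρ : ℂ ↦ (1 / (((1 + u : ℝ) : ℂ) - ρ)).re) hρ)

-- A zero within `δ` of `1` contributes at least `16 / (289 δ)` at `u = 16 δ`, and
-- `16 / 289 > 3 / 64 + 1 / 160`.
theorem sq_le_of_poleSum_le (hδ : 0 < δ) (hZ : ∀ ρ ∈ Z, ρ.re ≤ 1)
    (h : poleSum Z (16 * δ) ≤ (3 / 64 + 1 / 160) / δ) (hρ : ρ ∈ Z) :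
    δ ^ 2 ≤ (1 - ρ.re) ^ 2 + ρ.im ^ 2 := by
  by_contra! hnear
  have hle := (re_one_div_sub_le_poleSum hZ (by positivity) hρ).trans h
  have ha : 0 ≤ 1 - ρ.re := by linarith [hZ ρ hρ]
  rw [re_one_div_sub_eq] at hle
  set a := 1 - ρ.re
  set b := ρ.im
  have haδ : a ≤ δ := by nlinarith [sq_nonneg b]
  have hden : (16 * δ + a) ^ 2 + b ^ 2 ≤ 289 * δ ^ 2 := by nlinarith
  have hlarge : 16 / 289 / δ ≤ (16 * δ + a) / ((16 * δ + a) ^ 2 + b ^ 2) := by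
    calc 16 / 289 / δ = 16 * δ / (289 * δ ^ 2) := by field_simp
      _ ≤ _ := by gcongr; linarith
  have := hlarge.trans hle
  rw [div_le_div_iff_of_pos_right hδ] at this
  norm_num at this

theorem re_one_div_sub_le_four_mul (hu : 0 < u) (huδ : u ≤ δ) (hρ : ρ.re ≤ 1)
    (hfar : δ ^ 2 ≤ (1 - ρ.re) ^ 2 + ρ.im ^ 2) :
    (1 / (((1 + u : ℝ) : ℂ) - ρ)).re ≤ 4 * (1 / (((1 + δ : ℝ) : ℂ) - ρ)).re := by
  rw [re_one_div_sub_eq, re_one_div_sub_eq]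
  have ha : 0 ≤ 1 - ρ.re := by linarith
  set a := 1 - ρ.re
  set b := ρ.im
  have hδ : 0 < δ := hu.trans_le huδ
  have hden : (δ + a) ^ 2 + b ^ 2 ≤ 4 * ((u + a) ^ 2 + b ^ 2) := by
    nlinarith [sq_nonneg (δ - a), sq_nonneg u, mul_nonneg hu.le ha]
  rw [← mul_div_assoc, div_le_div_iff₀ (by positivity) (by positivity)]
  calc (u + a) * ((δ + a) ^ 2 + b ^ 2) ≤ (δ + a) * (4 * ((u + a) ^ 2 + b ^ 2)) := by gcongr
    _ = _ := by ring

theorem poleSum_le_of_forall_le {K u₀ : ℝ} (hK : 1 / 10 ≤ K * u₀) (hu₀ : 0 < u₀)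
    (hZ : ∀ ρ ∈ Z, ρ.re ≤ 1) (h : ∀ u, 0 < u → u ≤ u₀ → poleSum Z u ≤ 3 / 4 / u + K)
    (hu : 0 < u) (huu₀ : u ≤ u₀) : poleSum Z u ≤ 500 * K := by
  have hKpos : 0 < K := pos_of_mul_pos_left (by linarith) hu₀.le
  set δ : ℝ := 1 / (160 * K) with hδ
  have hδpos : 0 < δ := by positivity
  have hδu₀ : 16 * δ ≤ u₀ := by
    rw [hδ, mul_one_div, div_le_iff₀ (by positivity)]
    linarith
  have hδK : 3 / 4 / δ = 120 * K := by
    rw [hδ]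
    field_simp
    norm_num
  rcases le_or_gt δ u with hδu | huδ
  · calc poleSum Z u ≤ 3 / 4 / u + K := h u hu huu₀
      _ ≤ 3 / 4 / δ + K := by gcongr
      _ ≤ 500 * K := by linarith
  have hfar : ∀ ρ ∈ Z, δ ^ 2 ≤ (1 - ρ.re) ^ 2 + ρ.im ^ 2 := fun ρ hρ ↦ by
    refine sq_le_of_poleSum_le hδpos hZ ((h _ (by positivity) hδu₀).trans_eq ?_) hρ
    rw [hδ]
    field_simp
    norm_num
  calc poleSum Z u ≤ (Z.map fun ρ ↦ 4 * (1 / (((1 + δ : ℝ) : ℂ) - ρ)).re).sum :=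
        Multiset.sum_map_le_sum_map _ _ fun ρ hρ ↦
          re_one_div_sub_le_four_mul hu huδ.le (hZ ρ hρ) (hfar ρ hρ)
    _ = 4 * poleSum Z δ := Multiset.sum_map_mul_left ..
    _ ≤ 4 * (3 / 4 / δ + K) := by gcongr; exact h δ hδpos (by linarith)
    _ ≤ 500 * K := by linarith

end PoleSum

/-- The norm `N(α) = α ᾱ` of a Gaussian integer, as a real number. -/
noncomputable abbrev gnorm (α : GaussianInt) : ℝ := normSq (α : ℂ)

section HeckeCharacter

/-- The Hecke character `z ↦ (z / |z|) ^ l`, twisted by `|z| ^ (-2 s)`; it vanishes at `0` when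
`l ≠ 0` or `s ≠ 0`. -/
noncomputable def heckeChar (l : ℕ) (s z : ℂ) : ℂ := (z / ‖z‖) ^ l * (normSq z : ℂ) ^ (-s)

variable (l : ℕ) {s : ℂ}

theorem heckeChar_mul (s z w : ℂ) : heckeChar l s (z * w) = heckeChar l s z * heckeChar l s w := by
  simp only [heckeChar, map_mul, norm_mul, ofReal_mul, mul_div_mul_comm, mul_pow,
    mul_cpow_ofReal_nonneg (normSq_nonneg z) (normSq_nonneg w)]
  ring

theorem heckeChar_zero (hs : s ≠ 0) : heckeChar l s 0 = 0 := by
  simp [heckeChar, hs]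

theorem norm_div_norm_self_pow {z : ℂ} (hz : z ≠ 0) : ‖(z / ‖z‖) ^ l‖ = 1 := by
  rw [norm_pow, norm_div, norm_real, norm_norm, div_self (norm_ne_zero_iff.mpr hz), one_pow]

theorem norm_heckeChar (hs : s.re ≠ 0) (z : ℂ) : ‖heckeChar l s z‖ = normSq z ^ (-s.re) := by
  rcases eq_or_ne z 0 with rfl | hz
  · rw [heckeChar_zero l (by rintro rfl; exact hs rfl), norm_zero, map_zero,
      Real.zero_rpow (neg_ne_zero.mpr hs)]
  · rw [heckeChar, norm_mul, norm_div_norm_self_pow l hz, one_mul,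
      norm_cpow_eq_rpow_re_of_pos (normSq_pos.mpr hz), neg_re]

theorem heckeChar_eq_one_of_pow_four_eq_one (hl : 4 ∣ l) {z : ℂ} (hz : z ^ 4 = 1) :
    heckeChar l s z = 1 := by
  have hz1 : ‖z‖ = 1 := norm_eq_one_of_pow_eq_one hz four_ne_zero
  obtain ⟨m, rfl⟩ := hl
  rw [heckeChar, normSq_eq_norm_sq, hz1, ofReal_one, div_one, pow_mul, hz]
  simp

theorem hasDerivAt_heckeChar (s : ℂ) {z : ℂ} (hz : z ≠ 0) :
    HasDerivAt (heckeChar l · z) (-(Real.log (normSq z) * heckeChar l s z)) s := by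
  have hz' : (normSq z : ℂ) ≠ 0 := ofReal_ne_zero.mpr (normSq_pos.mpr hz).ne'
  refine (((hasDerivAt_neg s).const_cpow (.inl hz')).const_mul _).congr_deriv ?_
  rw [heckeChar, ofReal_log (normSq_nonneg z)]
  ring

end HeckeCharacter

section HeckeSum

theorem gnorm_eq_intCast (α : GaussianInt) : gnorm α = (α.norm : ℤ) :=
  (GaussianInt.intCast_real_norm α).symm

theorem gnorm_zero : gnorm 0 = 0 := by simp [gnorm]

theorem gnorm_nonneg (α : GaussianInt) : 0 ≤ gnorm α := normSq_nonneg _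

theorem one_le_gnorm {α : GaussianInt} (hα : α ≠ 0) : 1 ≤ gnorm α := by
  rw [gnorm_eq_intCast]
  exact_mod_cast GaussianInt.norm_pos.mpr hα

theorem log_gnorm_nonneg (α : GaussianInt) : 0 ≤ Real.log (gnorm α) := by
  rw [gnorm_eq_intCast]
  exact Real.log_intCast_nonneg _

theorem gnorm_rpow_le_rpow {x y : ℝ} (hx : x < 0) (hxy : x ≤ y) (α : GaussianInt) :
    gnorm α ^ x ≤ gnorm α ^ y := by
  rcases eq_or_ne α 0 with rfl | hα
  · rw [gnorm_zero, Real.zero_rpow hx.ne]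
    exact Real.zero_rpow_nonneg y
  · exact Real.rpow_le_rpow_of_exponent_le (one_le_gnorm hα) hxy

theorem summable_gnorm_rpow {σ : ℝ} (hσ : 1 < σ) :
    Summable fun α : GaussianInt ↦ gnorm α ^ (-σ) := by
  let coords : GaussianInt ≃ (Fin 2 → ℤ) :=
    { toFun α := ![α.re, α.im]
      invFun v := ⟨v 0, v 1⟩
      left_inv _ := rfl
      right_inv v := by ext i; fin_cases i <;> rfl }
  have hcoords (α : GaussianInt) : ‖coords α‖ ≤ ‖(α : ℂ)‖ := by
    refine (pi_norm_le_iff_of_nonneg (norm_nonneg _)).mpr fun i ↦ ?_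
    fin_cases i
    · exact (congrArg abs (GaussianInt.intCast_re α)).trans_le (abs_re_le_norm (α : ℂ))
    · exact (congrArg abs (GaussianInt.intCast_im α)).trans_le (abs_im_le_norm (α : ℂ))
  have hsum := coords.summable_iff.mpr
    (EisensteinSeries.summable_one_div_norm_rpow (k := 2 * σ) (by linarith))
  refine hsum.of_nonneg_of_le (fun α ↦ Real.rpow_nonneg (gnorm_nonneg α) _) fun α ↦ ?_
  rcases eq_or_ne α 0 with rfl | hα
  · rw [gnorm_zero, Real.zero_rpow (by linarith)]
    exact Real.rpow_nonneg (norm_nonneg _) _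
  · have hpos : 0 < ‖coords α‖ := by
      refine norm_pos_iff.mpr fun h ↦ hα (coords.injective (h.trans ?_))
      ext i; fin_cases i <;> rfl
    calc gnorm α ^ (-σ) = ‖(α : ℂ)‖ ^ (-(2 * σ)) := by
          rw [gnorm, normSq_eq_norm_sq, ← Real.rpow_natCast, ← Real.rpow_mul (norm_nonneg _)]
          congr 1; push_cast; ring
      _ ≤ ‖coords α‖ ^ (-(2 * σ)) :=
          Real.rpow_le_rpow_of_nonpos hpos (hcoords α) (by linarith)

theorem summable_log_mul_rpow {ι : Type*} {N : ι → ℝ} (hN : ∀ i, N i = 0 ∨ 1 ≤ N i)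
    (hsum : ∀ σ : ℝ, 1 < σ → Summable fun i ↦ N i ^ (-σ)) {σ : ℝ} (hσ : 1 < σ) :
    Summable fun i ↦ Real.log (N i) * N i ^ (-σ) := by
  have hε : 0 < (σ - 1) / 2 := by linarith
  refine ((hsum ((1 + σ) / 2) (by linarith)).mul_left ((σ - 1) / 2)⁻¹).of_norm_bounded
    fun i ↦ ?_
  rcases hN i with h0 | h1
  · rw [h0, Real.log_zero, zero_mul, norm_zero]
    positivity
  have hpos : 0 < N i := one_pos.trans_le h1
  rw [Real.norm_of_nonneg (mul_nonneg (Real.log_nonneg h1) (Real.rpow_nonneg hpos.le _))]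
  calc Real.log (N i) * N i ^ (-σ) ≤ N i ^ ((σ - 1) / 2) / ((σ - 1) / 2) * N i ^ (-σ) := by
        gcongr
        exact Real.log_le_rpow_div hpos.le hε
    _ = ((σ - 1) / 2)⁻¹ * N i ^ (-((1 + σ) / 2)) := by
        rw [div_mul_eq_mul_div, ← Real.rpow_add hpos, div_eq_inv_mul]
        ring_nf

theorem summable_log_gnorm_mul_rpow {σ : ℝ} (hσ : 1 < σ) :
    Summable fun α : GaussianInt ↦ Real.log (gnorm α) * gnorm α ^ (-σ) :=
  summable_log_mul_rpow (fun α ↦ (eq_or_ne α 0).imp (fun h ↦ h ▸ gnorm_zero) one_le_gnorm)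
    (fun _ ↦ summable_gnorm_rpow) hσ

theorem summable_log_natCast_mul_rpow {σ : ℝ} (hσ : 1 < σ) :
    Summable fun n : ℕ ↦ Real.log n * (n : ℝ) ^ (-σ) :=
  summable_log_mul_rpow (fun n ↦ n.eq_zero_or_pos.imp (fun h ↦ by simp [h])
    fun h ↦ by exact_mod_cast h) (fun _ h ↦ Real.summable_nat_rpow.mpr (neg_lt_neg h)) hσ

/-- The Hecke `L`-series `∑ χ(α) N(α) ^ (-s)` over all Gaussian integers; when `4 ∣ l` it is four
times the `L`-function of the Hecke character of frequency `l`. -/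
noncomputable def heckeSum (l : ℕ) (s : ℂ) : ℂ := ∑' α : GaussianInt, heckeChar l s α

variable (l : ℕ) {s : ℂ}

theorem summable_heckeChar (hs : 1 < s.re) :
    Summable fun α : GaussianInt ↦ heckeChar l s α := by
  refine .of_norm ?_
  simp only [norm_heckeChar l (show s.re ≠ 0 by linarith)]
  exact summable_gnorm_rpow hs

theorem hasDerivAt_heckeSum (hs : 1 < s.re) :
    HasDerivAt (heckeSum l)
      (-∑' α : GaussianInt, (Real.log (gnorm α) : ℂ) * heckeChar l s α) s := by
  obtain ⟨σ, hσ, hσs⟩ := exists_between hs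
  have hopen : IsOpen {w : ℂ | σ < w.re} := isOpen_lt continuous_const continuous_re
  have hderiv (α : GaussianInt) {w : ℂ} (hw : σ < w.re) : HasDerivAt (heckeChar l · (α : ℂ))
      (-(Real.log (gnorm α) * heckeChar l w α)) w := by
    rcases eq_or_ne α 0 with rfl | hα
    · have hev : (heckeChar l · ((0 : GaussianInt) : ℂ)) =ᶠ[𝓝 w] fun _ ↦ 0 := by
        filter_upwards [hopen.mem_nhds hw] with v hv
        have : v ≠ 0 := by rintro rfl; simp at hv; linarith
        simp [heckeChar_zero l this]
      simpa [gnorm_zero] using (hasDerivAt_const w (0 : ℂ)).congr_of_eventuallyEq hev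
    · exact hasDerivAt_heckeChar l w (GaussianInt.toComplex_eq_zero.not.mpr hα)
  have hdiff (α : GaussianInt) : DifferentiableOn ℂ (heckeChar l · (α : ℂ)) {w | σ < w.re} :=
    fun w hw ↦ (hderiv α hw).differentiableAt.differentiableWithinAt
  have hbound (α : GaussianInt) (w : ℂ) (hw : σ < w.re) :
      ‖heckeChar l w α‖ ≤ gnorm α ^ (-σ) := by
    rw [norm_heckeChar l (by linarith)]
    exact gnorm_rpow_le_rpow (by linarith) (by linarith) α
  have hsum := summable_gnorm_rpow hσ
  have hF := (differentiableOn_tsum_of_summable_norm hsum hdiff hopen hbound).differentiableAt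
    (hopen.mem_nhds hσs)
  refine hF.hasDerivAt.congr_deriv ?_
  rw [← (hasSum_deriv_of_summable_norm hsum hdiff hopen hbound hσs).tsum_eq, ← tsum_neg]
  exact tsum_congr fun α ↦ (hderiv α hσs).deriv

end HeckeSum

section LatticeSum

/-- The half-open unit square `[0, 1)²`, a fundamental domain of `ℂ` modulo `ℤ[i]`. -/
def unitSquare : Set ℂ := Ico (0 : ℝ) 1 ×ℂ Ico (0 : ℝ) 1

theorem measurableSet_unitSquare : MeasurableSet unitSquare :=
  (measurableSet_Ico.preimage measurable_re).inter (measurableSet_Ico.preimage measurable_im)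

theorem volume_unitSquare : volume unitSquare = 1 := by
  have h : unitSquare = measurableEquivRealProd ⁻¹' (Ico (0 : ℝ) 1 ×ˢ Ico (0 : ℝ) 1) := rfl
  rw [h, volume_preserving_equiv_real_prod.measure_preimage_equiv, Measure.volume_eq_prod,
    Measure.prod_prod, Real.volume_Ico]
  simp

instance : IsProbabilityMeasure (volume.restrict unitSquare) :=
  ⟨by rw [Measure.restrict_apply_univ, volume_unitSquare]⟩

theorem norm_le_of_mem_unitSquare {v : ℂ} (hv : v ∈ unitSquare) : ‖v‖ ≤ 3 / 2 := by
  obtain ⟨⟨hr0, hr1⟩, hi0, hi1⟩ := hv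
  refine le_of_sq_le_sq ?_ (by norm_num)
  rw [← normSq_eq_norm_sq, normSq_apply]
  nlinarith

theorem add_mem_unitSquare_iff {α : GaussianInt} {z : ℂ} :
    (α : ℂ) + z ∈ unitSquare ↔ α = ⟨-⌊z.re⌋, -⌊z.im⌋⟩ := by
  have key (n : ℤ) (x : ℝ) : (n : ℝ) + x ∈ Ico (0 : ℝ) 1 ↔ n = -⌊x⌋ := by
    rw [← neg_eq_iff_eq_neg, eq_comm, Int.floor_eq_iff, mem_Ico]
    push_cast
    constructor <;> rintro ⟨h0, h1⟩ <;> constructor <;> linarith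
  rw [Zsqrtd.ext_iff, ← key, ← key, GaussianInt.intCast_re, GaussianInt.intCast_im]
  rfl

theorem isAddFundamentalDomain_unitSquare :
    IsAddFundamentalDomain GaussianInt.toComplex.toAddMonoidHom.range unitSquare := by
  refine .mk' measurableSet_unitSquare.nullMeasurableSet fun z ↦
    ⟨⟨_, ⟨-⌊z.re⌋, -⌊z.im⌋⟩, rfl⟩, add_mem_unitSquare_iff.mpr rfl, ?_⟩
  rintro ⟨_, α, rfl⟩ hα
  exact Subtype.ext (congrArg GaussianInt.toComplex (add_mem_unitSquare_iff.mp hα))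

instance : Countable GaussianInt.toComplex.toAddMonoidHom.range :=
  have : Countable GaussianInt := Function.Injective.countable (f := fun α ↦ (α.re, α.im))
    fun _ _ h ↦ Zsqrtd.ext (congrArg Prod.fst h) (congrArg Prod.snd h)
  (countable_range _).to_subtype

theorem integral_eq_tsum_unitSquare {E : Type*} [NormedAddCommGroup E] [NormedSpace ℝ E]
    {f : ℂ → E} (hf : Integrable f) :
    ∫ z, f z = ∑' α : GaussianInt, ∫ v in unitSquare, f (α + v) := by
  rw [isAddFundamentalDomain_unitSquare.integral_eq_tsum'' f hf]
  exact ((Equiv.ofInjective _ GaussianInt.toComplex_injective).tsum_eq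
    fun z ↦ ∫ v in unitSquare, f (z + v)).symm

end LatticeSum

section HolomorphicIntegral

theorem differentiableOn_integral_of_norm_le {X E : Type*} [MeasurableSpace X] {μ : Measure X}
    [IsFiniteMeasure μ] [NormedAddCommGroup E] [NormedSpace ℂ E] {U : Set ℂ} (hU : IsOpen U)
    {F : ℂ → X → E} {C : ℝ}
    (hmeas : ∀ s ∈ U, AEStronglyMeasurable (F s) μ) (hdiff : ∀ x, DifferentiableOn ℂ (F · x) U)
    (hbound : ∀ s ∈ U, ∀ x, ‖F s x‖ ≤ C) : DifferentiableOn ℂ (fun s ↦ ∫ x, F s x ∂μ) U := by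
  intro s hs
  obtain ⟨ε, hε, hεU⟩ := Metric.isOpen_iff.mp hU s hs
  have hball {w : ℂ} (hw : w ∈ ball s (ε / 2)) : closedBall w (ε / 3) ⊆ U := fun v hv ↦
    hεU (by
      rw [mem_ball] at hw ⊢; rw [mem_closedBall] at hv
      linarith [dist_triangle v w s])
  have hderiv (x : X) {w : ℂ} (hw : w ∈ ball s (ε / 2)) :
      HasDerivAt (F · x) (deriv (F · x) w) w :=
    ((hdiff x).differentiableAt (mem_of_superset (closedBall_mem_nhds w (by positivity))
      (hball hw))).hasDerivAt
  have hderiv_bound (x : X) {w : ℂ} (hw : w ∈ ball s (ε / 2)) :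
      ‖deriv (F · x) w‖ ≤ C / (ε / 3) :=
    norm_deriv_le_of_forall_mem_sphere_norm_le (by positivity)
      (((hdiff x).mono (hball hw)).diffContOnCl_ball subset_rfl)
      fun v hv ↦ hbound v (hball hw (sphere_subset_closedBall hv)) x
  have hmem : s ∈ ball s (ε / 2) := mem_ball_self (by positivity)
  have hderiv_meas : AEStronglyMeasurable (fun x ↦ deriv (F · x) s) μ := by
    have hn (n : ℕ) : 0 < ε / (n + 2) := by positivity
    have hseq : Tendsto (fun n : ℕ ↦ ((ε / (n + 2) : ℝ) : ℂ)) atTop (𝓝[≠] 0) := by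
      refine tendsto_nhdsWithin_iff.mpr ⟨?_, .of_forall fun n ↦ ofReal_ne_zero.mpr (hn n).ne'⟩
      exact (continuous_ofReal.tendsto' 0 0 ofReal_zero).comp (tendsto_const_nhds.div_atTop
        (tendsto_natCast_atTop_atTop.atTop_add tendsto_const_nhds))
    have hmem_n (n : ℕ) : s + ((ε / (n + 2) : ℝ) : ℂ) ∈ U := hεU (by
      rw [mem_ball, dist_self_add_left, norm_real, Real.norm_of_nonneg (hn n).le]
      exact div_lt_self hε (by linarith [n.cast_nonneg (α := ℝ)]))
    exact aestronglyMeasurable_of_tendsto_ae atTop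
      (fun n ↦ ((hmeas _ (hmem_n n)).sub (hmeas s hs)).const_smul _)
      (.of_forall fun x ↦ (hderiv x hmem).tendsto_slope_zero.comp hseq)
  exact (hasDerivAt_integral_of_dominated_loc_of_deriv_le (ball_mem_nhds s (half_pos hε))
    (eventually_of_mem (hU.mem_nhds hs) hmeas)
    (.of_bound (hmeas s hs) C (.of_forall fun x ↦ hbound s hs x)) hderiv_meas
    (.of_forall fun x w hw ↦ hderiv_bound x hw) (integrable_const _)
    (.of_forall fun x w hw ↦ hderiv x hw)).2.differentiableAt.differentiableWithinAt

end HolomorphicIntegral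

section LatticeDefect

/-- The error made at the cell `α + [0, 1)²` when the integral of `f` is replaced by the value of
`f` at the corner `α`. -/
noncomputable def latticeDefect (f : ℂ → ℂ) (α : GaussianInt) : ℂ :=
  f α - ∫ v in unitSquare, f (α + v)

theorem tsum_latticeDefect {f : ℂ → ℂ} (hf : Integrable f)
    (hsum : Summable fun α : GaussianInt ↦ f α) (hdefect : Summable (latticeDefect f)) :
    ∑' α, latticeDefect f α = (∑' α : GaussianInt, f α) - ∫ z, f z := by
  have hint : Summable fun α : GaussianInt ↦ ∫ v in unitSquare, f (α + v) :=
    (hsum.sub hdefect).congr fun α ↦ by rw [latticeDefect, sub_sub_cancel]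
  rw [integral_eq_tsum_unitSquare hf]
  exact hsum.tsum_sub hint

theorem norm_latticeDefect_le {f : ℂ → ℂ} (hf : Measurable f) {α : GaussianInt} {C : ℝ}
    (hC : ∀ v ∈ unitSquare, ‖f α - f (α + v)‖ ≤ C) : ‖latticeDefect f α‖ ≤ C := by
  have hmeas : Measurable fun v ↦ f (α + v) := hf.comp (measurable_const_add _)
  have hint : IntegrableOn (fun v ↦ f (α + v)) unitSquare := by
    refine Integrable.of_bound hmeas.aestronglyMeasurable (‖f α‖ + C)
      (ae_restrict_of_forall_mem measurableSet_unitSquare fun v hv ↦ ?_)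
    calc ‖f (α + v)‖ = ‖f α - (f α - f (α + v))‖ := by rw [sub_sub_cancel]
      _ ≤ ‖f α‖ + C := (norm_sub_le _ _).trans (by gcongr; exact hC v hv)
  have hdefect : latticeDefect f α = ∫ v in unitSquare, (f α - f (α + v)) := by
    rw [integral_sub (integrable_const _) hint, integral_const, probReal_univ, one_smul,
      latticeDefect]
  rw [hdefect]
  have hvol : volume unitSquare < ⊤ := volume_unitSquare.trans_lt ENNReal.one_lt_top
  refine (norm_setIntegral_le_of_norm_le_const hvol hC).trans_eq ?_
  rw [measureReal_def, volume_unitSquare, ENNReal.toReal_one, mul_one]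

end LatticeDefect

section Oscillation

theorem norm_pow_sub_pow_le {R : Type*} [SeminormedRing R] [NormOneClass R] {a b : R}
    (ha : ‖a‖ ≤ 1) (hb : ‖b‖ ≤ 1) (n : ℕ) : ‖a ^ n - b ^ n‖ ≤ n * ‖a - b‖ := by
  induction n with
  | zero => simp
  | succ n ih =>
    calc ‖a ^ (n + 1) - b ^ (n + 1)‖ = ‖a ^ n * (a - b) + (a ^ n - b ^ n) * b‖ := by
          congr 1; noncomm_ring
      _ ≤ 1 * ‖a - b‖ + n * ‖a - b‖ * 1 := by
          refine (norm_add_le _ _).trans (add_le_add ?_ ?_) <;>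
            refine (norm_mul_le _ _).trans ?_ <;> gcongr
          exact (norm_pow_le a n).trans (pow_le_one₀ (norm_nonneg a) ha)
      _ = (n + 1 : ℕ) * ‖a - b‖ := by push_cast; ring

theorem norm_div_norm_sub_div_norm_le {z w : ℂ} (hz : z ≠ 0) (hw : w ≠ 0) :
    ‖z / ‖z‖ - w / ‖w‖‖ ≤ 2 * ‖z - w‖ / ‖z‖ := by
  have hz' : (‖z‖ : ℂ) ≠ 0 := ofReal_ne_zero.mpr (norm_ne_zero_iff.mpr hz)
  have hw' : (‖w‖ : ℂ) ≠ 0 := ofReal_ne_zero.mpr (norm_ne_zero_iff.mpr hw)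
  calc ‖z / ‖z‖ - w / ‖w‖‖ = ‖(z - w) / ‖z‖ + w / ‖w‖ * ((‖w‖ - ‖z‖ : ℝ) / ‖z‖)‖ := by
        congr 1; push_cast; field_simp; ring
    _ ≤ ‖z - w‖ / ‖z‖ + 1 * (‖z - w‖ / ‖z‖) := by
        refine (norm_add_le _ _).trans (add_le_add (by simp) ?_)
        rw [norm_mul, norm_div, norm_div, norm_real, norm_real, norm_real, norm_norm, norm_norm,
          div_self (norm_ne_zero_iff.mpr hw), norm_sub_rev z w]
        gcongr
        exact abs_norm_sub_norm_le w z
    _ = 2 * ‖z - w‖ / ‖z‖ := by ring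

theorem norm_ofReal_cpow_neg_sub_le {s : ℂ} (hs : -1 ≤ s.re) {m x y : ℝ} (hm : 0 < m)
    (hx : m ≤ x) (hy : m ≤ y) :
    ‖(x : ℂ) ^ (-s) - (y : ℂ) ^ (-s)‖ ≤ ‖s‖ * m ^ (-s.re - 1) * |x - y| := by
  rcases eq_or_ne s 0 with rfl | hs0
  · simp
  refine (convex_Ici m).norm_image_sub_le_of_norm_hasDerivWithin_le
    (fun t ht ↦ (hasDerivAt_ofReal_cpow_const (hm.trans_le ht).ne'
      (neg_ne_zero.mpr hs0)).hasDerivWithinAt) (fun t ht ↦ ?_) hy hx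
  rw [norm_mul, norm_neg, norm_cpow_eq_rpow_re_of_pos (hm.trans_le ht), sub_re, neg_re, one_re]
  exact mul_le_mul_of_nonneg_left (Real.rpow_le_rpow_of_nonpos hm ht (by linarith)) (norm_nonneg s)

variable {l : ℕ} {s : ℂ}

theorem normSq_cpow_neg {z : ℂ} (hz : z ≠ 0) (s : ℂ) :
    (normSq z : ℂ) ^ (-s) = (‖z‖ : ℂ) ^ (-(2 * s)) := by
  have hz' : (‖z‖ : ℂ) ≠ 0 := ofReal_ne_zero.mpr (norm_ne_zero_iff.mpr hz)
  rw [normSq_eq_norm_sq, sq, ofReal_mul, mul_cpow_ofReal_nonneg (norm_nonneg z) (norm_nonneg z),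
    ← cpow_add _ _ hz']
  ring_nf

theorem norm_div_norm_pow_sub_le {z w : ℂ} (hz : z ≠ 0) (hw : w ≠ 0) (l : ℕ) :
    ‖(z / ‖z‖) ^ l - (w / ‖w‖) ^ l‖ ≤ l * (2 * ‖z - w‖ / ‖z‖) := by
  refine (norm_pow_sub_pow_le ?_ ?_ l).trans ?_
  · simp [hz]
  · simp [hw]
  · gcongr
    exact norm_div_norm_sub_div_norm_le hz hw

theorem norm_normSq_cpow_neg_sub_le (hs : -1 / 2 ≤ s.re) (hs4 : ‖s‖ ≤ 4) {z w : ℂ} (hz : z ≠ 0)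
    (hw : ‖z‖ / 4 ≤ ‖w‖) :
    ‖(normSq z : ℂ) ^ (-s) - (normSq w : ℂ) ^ (-s)‖ ≤
      2 * 4 ^ 10 * ‖z - w‖ * ‖z‖ ^ (-(2 * s).re - 1) := by
  have hs4' : s.re ≤ 4 := (re_le_norm s).trans hs4
  have hz_pos : 0 < ‖z‖ := norm_pos_iff.mpr hz
  have hw0 : w ≠ 0 := norm_pos_iff.mp (by linarith)
  have h4 : (4 : ℝ)⁻¹ ^ (-(2 * s).re - 1) ≤ 4 ^ 9 := by
    rw [Real.inv_rpow (by norm_num), ← Real.rpow_neg (by norm_num), ← Real.rpow_natCast]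
    exact Real.rpow_le_rpow_of_exponent_le (by norm_num) (by simp; linarith)
  rw [normSq_cpow_neg hz, normSq_cpow_neg hw0]
  refine (norm_ofReal_cpow_neg_sub_le (m := ‖z‖ / 4) (by simp; linarith) (by linarith)
    (by linarith) hw).trans ?_
  rw [div_eq_mul_inv, Real.mul_rpow (norm_nonneg z) (by norm_num)]
  calc ‖2 * s‖ * (‖z‖ ^ (-(2 * s).re - 1) * 4⁻¹ ^ (-(2 * s).re - 1)) * |‖z‖ - ‖w‖|
      ≤ (2 * 4) * (‖z‖ ^ (-(2 * s).re - 1) * 4 ^ 9) * ‖z - w‖ := by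
        gcongr
        · simpa using hs4
        · exact abs_norm_sub_norm_le z w
    _ = 2 * 4 ^ 10 * ‖z - w‖ * ‖z‖ ^ (-(2 * s).re - 1) := by ring

theorem norm_heckeChar_sub_le (hl : 1 ≤ l) (hs : 3 / 4 ≤ s.re) (hs4 : ‖s‖ ≤ 4) {z w : ℂ}
    (hz : 2 ≤ ‖z‖) (hzw : ‖z - w‖ ≤ 3 / 2) :
    ‖heckeChar l s z - heckeChar l s w‖ ≤ 4 ^ 12 * l * normSq z ^ (-(5 / 4) : ℝ) := by
  have hw : ‖z‖ / 4 ≤ ‖w‖ := by linarith [norm_sub_norm_le z w]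
  have hz0 : z ≠ 0 := norm_pos_iff.mp (by linarith)
  have hw0 : w ≠ 0 := norm_pos_iff.mp (by linarith)
  have hl1 : (1 : ℝ) ≤ l := by exact_mod_cast hl
  set χ : ℂ → ℂ := fun z ↦ (z / ‖z‖) ^ l
  set r : ℝ := ‖z‖ ^ (-(2 * s).re - 1) with hr_def
  have hr : 0 ≤ r := by positivity
  have hangular : ‖(χ z - χ w) * (normSq z : ℂ) ^ (-s)‖ ≤ 2 * ‖z - w‖ * l * r := by
    rw [norm_mul, normSq_cpow_neg hz0, norm_cpow_eq_rpow_re_of_pos (norm_pos_iff.mpr hz0)]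
    refine (mul_le_mul_of_nonneg_right (norm_div_norm_pow_sub_le hz0 hw0 l)
      (by positivity)).trans_eq ?_
    rw [hr_def, Real.rpow_sub_one (by positivity), neg_re]
    ring
  have hradial : ‖χ w * ((normSq z : ℂ) ^ (-s) - (normSq w : ℂ) ^ (-s))‖ ≤
      2 * 4 ^ 10 * ‖z - w‖ * r := by
    rw [norm_mul, norm_div_norm_self_pow l hw0, one_mul]
    exact norm_normSq_cpow_neg_sub_le (by linarith) hs4 hz0 hw
  have hr' : r ≤ normSq z ^ (-(5 / 4) : ℝ) := by
    rw [normSq_eq_norm_sq, ← Real.rpow_natCast, ← Real.rpow_mul (norm_nonneg z)]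
    refine Real.rpow_le_rpow_of_exponent_le (by linarith) ?_
    simp; linarith
  calc ‖heckeChar l s z - heckeChar l s w‖
      = ‖(χ z - χ w) * (normSq z : ℂ) ^ (-s)
          + χ w * ((normSq z : ℂ) ^ (-s) - (normSq w : ℂ) ^ (-s))‖ := by
        simp only [heckeChar, χ]; congr 1; ring
    _ ≤ 2 * ‖z - w‖ * l * r + 2 * 4 ^ 10 * ‖z - w‖ * r :=
        (norm_add_le _ _).trans (add_le_add hangular hradial)
    _ ≤ 2 * (3 / 2) * l * r + 2 * 4 ^ 10 * (3 / 2) * r := by gcongr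
    _ ≤ 4 ^ 12 * l * r := by nlinarith [mul_le_mul_of_nonneg_right hl1 hr]
    _ ≤ 4 ^ 12 * l * normSq z ^ (-(5 / 4) : ℝ) := by gcongr

end Oscillation

section Continuation

/-- The function `heckeChar l s`, set to zero near its singularity at the origin. It agrees with
`heckeChar l s` on the Gaussian integers. -/
noncomputable def truncHeckeChar (l : ℕ) (s : ℂ) : ℂ → ℂ :=
  (ball 0 (1 / 2))ᶜ.indicator (heckeChar l s)

/-- The continuation of `heckeSum l` to the half-plane `1 / 2 < Re s`, obtained by subtracting the
vanishing integral `∫ truncHeckeChar l s` from the sum cell by cell. -/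
noncomputable def heckeContinuation (l : ℕ) (s : ℂ) : ℂ :=
  ∑' α, latticeDefect (truncHeckeChar l s) α

variable {l : ℕ} {s : ℂ}

theorem truncHeckeChar_coe (hs : s ≠ 0) (α : GaussianInt) :
    truncHeckeChar l s α = heckeChar l s α := by
  rcases eq_or_ne α 0 with rfl | hα
  · rw [truncHeckeChar, indicator_of_notMem (by simp), GaussianInt.toComplex_zero,
      heckeChar_zero l hs]
  · refine indicator_of_mem ?_ _
    have h1 : 1 ≤ ‖(α : ℂ)‖ ^ 2 := normSq_eq_norm_sq (α : ℂ) ▸ one_le_gnorm hα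
    rw [mem_compl_iff, mem_ball_zero_iff, not_lt]
    nlinarith [norm_nonneg (α : ℂ)]

theorem measurable_truncHeckeChar (l : ℕ) (s : ℂ) : Measurable (truncHeckeChar l s) := by
  have : Measurable (heckeChar l s) := by unfold heckeChar; fun_prop
  exact this.indicator measurableSet_ball.compl

theorem norm_truncHeckeChar_le_rpow (hs : 0 < s.re) (z : ℂ) :
    ‖truncHeckeChar l s z‖ ≤ 3 ^ (2 * s.re) * (1 + ‖z‖) ^ (-(2 * s.re)) := by
  by_cases hz : z ∈ (ball (0 : ℂ) (1 / 2))ᶜ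
  · have hz' : 1 / 2 ≤ ‖z‖ := by simpa using hz
    have hmul : normSq z ^ (-s.re) = ‖z‖ ^ (-(2 * s.re)) := by
      rw [normSq_eq_norm_sq, ← Real.rpow_natCast, ← Real.rpow_mul (norm_nonneg z)]
      congr 1; push_cast; ring
    rw [truncHeckeChar, indicator_of_mem hz, norm_heckeChar l hs.ne', hmul,
      show (3 : ℝ) ^ (2 * s.re) = 3⁻¹ ^ (-(2 * s.re)) by
        rw [Real.inv_rpow (by norm_num), Real.rpow_neg (by norm_num), inv_inv],
      ← Real.mul_rpow (by norm_num) (by positivity)]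
    exact Real.rpow_le_rpow_of_nonpos (by positivity) (by linarith) (by linarith)
  · rw [truncHeckeChar, indicator_of_notMem hz, norm_zero]
    positivity

theorem norm_truncHeckeChar_le (hs : 0 < s.re) (hs4 : ‖s‖ ≤ 4) (z : ℂ) :
    ‖truncHeckeChar l s z‖ ≤ 3 ^ 8 := by
  refine (norm_truncHeckeChar_le_rpow hs z).trans ?_
  calc (3 : ℝ) ^ (2 * s.re) * (1 + ‖z‖) ^ (-(2 * s.re)) ≤ 3 ^ (8 : ℝ) * 1 := by
        gcongr
        · norm_num
        · linarith [re_le_norm s]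
        · exact Real.rpow_le_one_of_one_le_of_nonpos (by simp) (by linarith)
    _ = 3 ^ 8 := by norm_num

theorem integrable_truncHeckeChar (hs : 1 < s.re) : Integrable (truncHeckeChar l s) := by
  refine ((integrable_one_add_norm (r := 2 * s.re) ?_).const_mul (3 ^ (2 * s.re))).mono'
    (measurable_truncHeckeChar l s).aestronglyMeasurable
    (.of_forall fun z ↦ norm_truncHeckeChar_le_rpow (by linarith) z)
  rw [finrank_real_complex]
  push_cast; linarith

theorem integral_truncHeckeChar (hl : l ≠ 0) (s : ℂ) : ∫ z, truncHeckeChar l s z = 0 := by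
  -- Rotation by the angle `π / l` reverses the sign of the integrand.
  let ζ : Circle := Circle.exp (Real.pi / l)
  have hζ : heckeChar l s ζ = -1 := by
    have hpow : (ζ : ℂ) ^ l = -1 := by
      rw [Circle.coe_exp, ← exp_nat_mul, ← exp_pi_mul_I]
      congr 1
      push_cast
      field_simp
    rw [heckeChar, Circle.norm_coe, normSq_eq_norm_sq, Circle.norm_coe, ofReal_one, div_one, hpow]
    simp
  have hrot (z : ℂ) : truncHeckeChar l s (rotation ζ z) = -truncHeckeChar l s z := by
    simp only [truncHeckeChar, indicator, mem_compl_iff, mem_ball_zero_iff,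
      rotation_apply, norm_mul, Circle.norm_coe, one_mul, heckeChar_mul, hζ]
    split_ifs <;> simp
  have hself := (rotation ζ).measurePreserving.integral_comp
    (rotation ζ).toHomeomorph.measurableEmbedding (truncHeckeChar l s)
  simp only [hrot, integral_neg] at hself
  exact CharZero.neg_eq_self_iff.mp hself

theorem norm_latticeDefect_truncHeckeChar_le (hl : 1 ≤ l) (hs : 3 / 4 ≤ s.re) (hs4 : ‖s‖ ≤ 4)
    (α : GaussianInt) :
    ‖latticeDefect (truncHeckeChar l s) α‖ ≤ 4 ^ 12 * l * max 1 (gnorm α) ^ (-(5 / 4) : ℝ) := by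
  refine norm_latticeDefect_le (measurable_truncHeckeChar l s) fun v hv ↦ ?_
  have hv' := norm_le_of_mem_unitSquare hv
  have hl1 : (1 : ℝ) ≤ l := by exact_mod_cast hl
  rcases le_or_gt 2 ‖(α : ℂ)‖ with hα | hα
  · have hN : 1 ≤ gnorm α := by rw [gnorm, normSq_eq_norm_sq]; nlinarith
    have htrunc {z : ℂ} (hz : 1 / 2 ≤ ‖z‖) : truncHeckeChar l s z = heckeChar l s z :=
      indicator_of_mem (by simpa using hz) _
    have hαv := norm_sub_norm_le (α : ℂ) (-v)
    rw [norm_neg, sub_neg_eq_add] at hαv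
    rw [htrunc (by linarith), htrunc (by linarith), max_eq_right hN]
    exact norm_heckeChar_sub_le hl hs hs4 hα (by simpa using hv')
  · have hN : max 1 (gnorm α) ≤ 4 := by
      rw [gnorm, normSq_eq_norm_sq]
      exact max_le (by norm_num) (by nlinarith [norm_nonneg (α : ℂ)])
    calc ‖truncHeckeChar l s α - truncHeckeChar l s (α + v)‖ ≤ 3 ^ 8 + 3 ^ 8 :=
          (norm_sub_le _ _).trans (add_le_add (norm_truncHeckeChar_le (by linarith) hs4 _)
            (norm_truncHeckeChar_le (by linarith) hs4 _))
      _ ≤ 4 ^ 12 * 1 * 4 ^ (-2 : ℝ) := by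
          rw [Real.rpow_neg (by norm_num)]; norm_num
      _ ≤ 4 ^ 12 * l * max 1 (gnorm α) ^ (-(5 / 4) : ℝ) := by
          gcongr 4 ^ 12 * ?_ * ?_
          calc (4 : ℝ) ^ (-2 : ℝ) ≤ 4 ^ (-(5 / 4) : ℝ) :=
                Real.rpow_le_rpow_of_exponent_le (by norm_num) (by norm_num)
            _ ≤ _ := Real.rpow_le_rpow_of_nonpos (by positivity) hN (by norm_num)

theorem summable_max_one_gnorm_rpow {σ : ℝ} (hσ : 1 < σ) :
    Summable fun α : GaussianInt ↦ max 1 (gnorm α) ^ (-σ) := by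
  refine (summable_gnorm_rpow hσ).congr_cofinite ?_
  filter_upwards [(finite_singleton (0 : GaussianInt)).compl_mem_cofinite] with α hα
  rw [max_eq_right (one_le_gnorm hα)]

theorem heckeContinuation_eq_heckeSum (hl : 1 ≤ l) (hs : 1 < s.re) (hs4 : ‖s‖ ≤ 4) :
    heckeContinuation l s = heckeSum l s := by
  have hs0 : s ≠ 0 := by rintro rfl; norm_num at hs
  have hsum : Summable fun α : GaussianInt ↦ truncHeckeChar l s α := by
    simpa only [truncHeckeChar_coe hs0] using summable_heckeChar l hs
  rw [heckeContinuation, tsum_latticeDefect (integrable_truncHeckeChar hs) hsum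
    (.of_norm_bounded ((summable_max_one_gnorm_rpow (by norm_num)).mul_left (4 ^ 12 * (l : ℝ)))
      (norm_latticeDefect_truncHeckeChar_le hl (by linarith) hs4)),
    integral_truncHeckeChar (by omega), sub_zero, heckeSum]
  simp only [truncHeckeChar_coe hs0]

theorem exists_norm_heckeContinuation_le : ∃ C > 0, ∀ l : ℕ, 1 ≤ l → ∀ s : ℂ, 3 / 4 ≤ s.re →
    ‖s‖ ≤ 4 → ‖heckeContinuation l s‖ ≤ C * l := by
  have hsum := summable_max_one_gnorm_rpow (show 1 < (5 / 4 : ℝ) by norm_num)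
  refine ⟨4 ^ 12 * (∑' α : GaussianInt, max 1 (gnorm α) ^ (-(5 / 4) : ℝ)), ?_,
    fun l hl s hs hs4 ↦ ?_⟩
  · exact mul_pos (by norm_num) (hsum.tsum_pos (fun α ↦ by positivity) 0 (by positivity))
  · refine (tsum_of_norm_bounded (hsum.hasSum.mul_left (4 ^ 12 * (l : ℝ)))
      (norm_latticeDefect_truncHeckeChar_le hl hs hs4)).trans_eq ?_
    ring

theorem differentiableOn_latticeDefect_truncHeckeChar (l : ℕ) (α : GaussianInt) :
    DifferentiableOn ℂ (fun s ↦ latticeDefect (truncHeckeChar l s) α)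
      ({s | 3 / 4 < s.re} ∩ ball 0 4) := by
  have hU : IsOpen ({s : ℂ | 3 / 4 < s.re} ∩ ball 0 4) :=
    (isOpen_lt continuous_const continuous_re).inter isOpen_ball
  have hdiff (z : ℂ) : Differentiable ℂ (truncHeckeChar l · z) := by
    by_cases hz : z ∈ (ball (0 : ℂ) (1 / 2))ᶜ
    · have hz0 : z ≠ 0 := by rintro rfl; simp at hz
      simp only [truncHeckeChar, indicator_of_mem hz]
      exact fun s ↦ (hasDerivAt_heckeChar l s hz0).differentiableAt
    · simp only [truncHeckeChar, indicator_of_notMem hz, differentiable_const]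
  refine (hdiff α).differentiableOn.sub (differentiableOn_integral_of_norm_le hU
    (fun s _ ↦ ((measurable_truncHeckeChar l s).comp
      (measurable_const_add _)).aestronglyMeasurable)
    (fun v ↦ (hdiff _).differentiableOn) fun s hs v ↦ norm_truncHeckeChar_le ?_ ?_ _)
  · linarith [show 3 / 4 < s.re from hs.1]
  · exact (mem_ball_zero_iff.mp hs.2).le

theorem differentiableOn_heckeContinuation (hl : 1 ≤ l) :
    DifferentiableOn ℂ (heckeContinuation l) ({s | 3 / 4 < s.re} ∩ ball 0 4) :=
  differentiableOn_tsum_of_summable_norm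
    ((summable_max_one_gnorm_rpow (show 1 < (5 / 4 : ℝ) by norm_num)).mul_left (4 ^ 12 * (l : ℝ)))
    (differentiableOn_latticeDefect_truncHeckeChar l)
    ((isOpen_lt continuous_const continuous_re).inter isOpen_ball)
    fun α _ hs ↦ norm_latticeDefect_truncHeckeChar_le hl hs.1.le (mem_ball_zero_iff.mp hs.2).le α

end Continuation

section PrimeTransversal

/-- A family of primes containing exactly one prime from each class of associates. -/
structure IsPrimeTransversal {R ι : Type*} [CommMonoidWithZero R] (q : ι → R) : Prop where
  prime (i : ι) : Prime (q i)
  eq_of_associated {i j : ι} : Associated (q i) (q j) → i = j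
  exists_associated {a : R} : Prime a → ∃ i, Associated (q i) a

variable {R ι : Type*} [CommMonoidWithZero R] {q : ι → R} {L : R → ℝ}

theorem eq_zero_of_isUnit_of_map_mul (hL₀ : ∀ a, 0 ≤ L a)
    (hL : ∀ a b, a ≠ 0 → b ≠ 0 → L (a * b) = L a + L b) [Nontrivial R] {u : R} (hu : IsUnit u) :
    L u = 0 := by
  obtain ⟨u, rfl⟩ := hu
  have h1 := hL 1 1 one_ne_zero one_ne_zero
  have h2 := hL u ↑u⁻¹ u.ne_zero u⁻¹.ne_zero
  rw [Units.mul_inv] at h2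
  rw [mul_one] at h1
  linarith [hL₀ u, hL₀ ↑u⁻¹]

open Classical in
/-- The weight of the prime power `q i ^ (k + 1)` in `a`: it is `L (q i)` when the prime power
divides `a`, so that the weights add up to `L a`. -/
noncomputable def primePowerWeight (q : ι → R) (L : R → ℝ) (a : R) (ik : ι × ℕ) : ℝ :=
  if q ik.1 ^ (ik.2 + 1) ∣ a then L (q ik.1) else 0

theorem primePowerWeight_of_dvd {a : R} {ik : ι × ℕ} (h : q ik.1 ^ (ik.2 + 1) ∣ a) :
    primePowerWeight q L a ik = L (q ik.1) :=
  if_pos h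

theorem primePowerWeight_of_not_dvd {a : R} {ik : ι × ℕ} (h : ¬q ik.1 ^ (ik.2 + 1) ∣ a) :
    primePowerWeight q L a ik = 0 :=
  if_neg h

theorem primePowerWeight_nonneg (hL₀ : ∀ a, 0 ≤ L a) (a : R) (ik : ι × ℕ) :
    0 ≤ primePowerWeight q L a ik := by
  rw [primePowerWeight]
  split_ifs
  exacts [hL₀ _, le_rfl]

variable [UniqueFactorizationMonoid R]

open Classical in
theorem IsPrimeTransversal.multiplicity_eq_ite (hq : IsPrimeTransversal q) {p : R} (hp : Prime p)
    {j : ι} (hj : Associated (q j) p) (i : ι) : multiplicity (q i) p = if i = j then 1 else 0 := by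
  split_ifs with hij
  · subst hij
    rw [← multiplicity_eq_of_associated_right hj, multiplicity_self]
  · rw [multiplicity_eq_zero, (hq.prime i).dvd_prime_iff_associated hp]
    exact fun h ↦ hij (hq.eq_of_associated (h.trans hj.symm))

theorem IsPrimeTransversal.hasSum_multiplicity_mul (hq : IsPrimeTransversal q)
    (hL₀ : ∀ a, 0 ≤ L a) (hL : ∀ a b, a ≠ 0 → b ≠ 0 → L (a * b) = L a + L b) {a : R}
    (ha : a ≠ 0) : HasSum (fun i ↦ multiplicity (q i) a * L (q i)) (L a) := by
  classical
  have : Nontrivial R := nontrivial_of_ne a 0 ha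
  induction a using UniqueFactorizationMonoid.induction_on_prime with
  | h₁ => exact absurd rfl ha
  | h₂ u hu =>
    have hmult (i : ι) : multiplicity (q i) u = 0 :=
      multiplicity_eq_zero.mpr fun h ↦ (hq.prime i).not_isUnit (isUnit_of_dvd_unit h hu)
    simp only [eq_zero_of_isUnit_of_map_mul hL₀ hL hu, hmult, Nat.cast_zero, zero_mul]
    exact hasSum_zero
  | h₃ a p ha' hp ih =>
    obtain ⟨j, hj⟩ := hq.exists_associated hp
    have hLp : L p = L (q j) := by
      obtain ⟨u, rfl⟩ := hj
      rw [hL _ _ (hq.prime j).ne_zero u.ne_zero, eq_zero_of_isUnit_of_map_mul hL₀ hL u.isUnit,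
        add_zero]
    rw [hL p a hp.ne_zero ha', hLp]
    refine ((hasSum_ite_eq j (L (q j))).add (ih ha')).congr_fun fun i ↦ ?_
    rw [multiplicity_mul (hq.prime i) (.of_prime_left (hq.prime i) ha),
      hq.multiplicity_eq_ite hp hj i]
    split_ifs with hij
    · rw [hij]
      push_cast
      ring
    · push_cast
      ring

theorem IsPrimeTransversal.hasSum_primePowerWeight (hq : IsPrimeTransversal q)
    (hL₀ : ∀ a, 0 ≤ L a) (hL : ∀ a b, a ≠ 0 → b ≠ 0 → L (a * b) = L a + L b) {a : R}
    (ha : a ≠ 0) : HasSum (primePowerWeight q L a) (L a) := by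
  have hfiber (i : ι) : HasSum (fun k ↦ primePowerWeight q L a (i, k))
      (multiplicity (q i) a * L (q i)) := by
    have hdvd (k : ℕ) : q i ^ (k + 1) ∣ a ↔ k ∈ Finset.range (multiplicity (q i) a) := by
      rw [(FiniteMultiplicity.of_prime_left (hq.prime i) ha).pow_dvd_iff_le_multiplicity,
        Finset.mem_range, Nat.succ_le_iff]
    have hsum : HasSum (fun k ↦ primePowerWeight q L a (i, k))
        (∑ k ∈ Finset.range (multiplicity (q i) a), primePowerWeight q L a (i, k)) :=
      hasSum_sum_of_ne_finset_zero fun k hk ↦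
        primePowerWeight_of_not_dvd ((hdvd k).not.mpr hk)
    rwa [Finset.sum_congr (g := fun _ ↦ L (q i)) rfl
      fun k hk ↦ primePowerWeight_of_dvd ((hdvd k).mpr hk), Finset.sum_const,
      Finset.card_range, nsmul_eq_mul] at hsum
  have hbase := hq.hasSum_multiplicity_mul hL₀ hL ha
  have hsummable : Summable (primePowerWeight q L a) :=
    (summable_prod_of_nonneg fun ik ↦ primePowerWeight_nonneg hL₀ a ik).mpr
      ⟨fun i ↦ (hfiber i).summable, hbase.summable.congr fun i ↦ (hfiber i).tsum_eq.symm⟩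
  exact (hsummable.hasSum.prod_fiberwise hfiber).unique hbase ▸ hsummable.hasSum

variable {f : R →*₀ ℂ}

theorem IsPrimeTransversal.hasSum_primePowerWeight_mul_norm (hq : IsPrimeTransversal q)
    (hL₀ : ∀ a, 0 ≤ L a) (hL : ∀ a b, a ≠ 0 → b ≠ 0 → L (a * b) = L a + L b)
    (hf : Summable fun a ↦ L a * ‖f a‖) :
    HasSum (fun x : R × (ι × ℕ) ↦ primePowerWeight q L x.1 x.2 * ‖f x.1‖)
      (∑' a, L a * ‖f a‖) := by
  have hfiber (a : R) : HasSum (fun ik ↦ primePowerWeight q L a ik * ‖f a‖) (L a * ‖f a‖) := by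
    rcases eq_or_ne a 0 with rfl | ha
    · simpa only [map_zero, norm_zero, mul_zero] using hasSum_zero
    · exact (hq.hasSum_primePowerWeight hL₀ hL ha).mul_right _
  have hsummable : Summable fun x : R × (ι × ℕ) ↦ primePowerWeight q L x.1 x.2 * ‖f x.1‖ :=
    (summable_prod_of_nonneg fun x ↦
      mul_nonneg (primePowerWeight_nonneg hL₀ x.1 x.2) (norm_nonneg _)).mpr
      ⟨fun a ↦ (hfiber a).summable, hf.congr fun a ↦ (hfiber a).tsum_eq.symm⟩
  exact (hsummable.hasSum.prod_fiberwise hfiber).unique hf.hasSum ▸ hsummable.hasSum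

theorem IsPrimeTransversal.summable_mul_norm_pow (hq : IsPrimeTransversal q)
    (hL₀ : ∀ a, 0 ≤ L a) (hL : ∀ a b, a ≠ 0 → b ≠ 0 → L (a * b) = L a + L b)
    (hf : Summable fun a ↦ L a * ‖f a‖) :
    Summable fun ik : ι × ℕ ↦ L (q ik.1) * ‖f (q ik.1)‖ ^ (ik.2 + 1) := by
  refine ((hq.hasSum_primePowerWeight_mul_norm hL₀ hL hf).summable.comp_injective
    (i := fun ik ↦ (q ik.1 ^ (ik.2 + 1), ik)) fun _ _ h ↦ (Prod.ext_iff.mp h).2).congr fun ik ↦ ?_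
  rw [Function.comp_apply, primePowerWeight_of_dvd dvd_rfl, map_pow, norm_pow]

theorem IsPrimeTransversal.tsum_mul_norm_pow_le (hq : IsPrimeTransversal q)
    (hL₀ : ∀ a, 0 ≤ L a) (hL : ∀ a b, a ≠ 0 → b ≠ 0 → L (a * b) = L a + L b)
    (hf : Summable fun a ↦ L a * ‖f a‖) :
    ∑' ik : ι × ℕ, L (q ik.1) * ‖f (q ik.1)‖ ^ (ik.2 + 1) ≤ ∑' a, L a * ‖f a‖ := by
  have hsum := hq.hasSum_primePowerWeight_mul_norm hL₀ hL hf
  rw [← hsum.tsum_eq]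
  refine (hq.summable_mul_norm_pow hL₀ hL hf).tsum_le_tsum_of_inj
    (fun ik ↦ (q ik.1 ^ (ik.2 + 1), ik)) (fun _ _ h ↦ (Prod.ext_iff.mp h).2)
    (fun x _ ↦ mul_nonneg (primePowerWeight_nonneg hL₀ x.1 x.2) (norm_nonneg _))
    (fun ik ↦ ?_) hsum.summable
  rw [primePowerWeight_of_dvd dvd_rfl, map_pow, norm_pow]

theorem IsPrimeTransversal.tsum_primePowerWeight_mul (hq : IsPrimeTransversal q) (ik : ι × ℕ) :
    ∑' a, (primePowerWeight q L a ik : ℂ) * f a =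
      L (q ik.1) * f (q ik.1) ^ (ik.2 + 1) * ∑' a, f a := by
  have hd : q ik.1 ^ (ik.2 + 1) ≠ 0 := pow_ne_zero _ (hq.prime ik.1).ne_zero
  rw [← (mul_right_injective₀ hd).tsum_eq, ← tsum_mul_left]
  · refine tsum_congr fun b ↦ ?_
    rw [primePowerWeight_of_dvd (dvd_mul_right _ _), map_mul, map_pow, mul_assoc]
  · refine Function.support_subset_iff'.mpr fun a ha ↦ ?_
    rw [primePowerWeight_of_not_dvd fun ⟨b, hb⟩ ↦ ha ⟨b, hb.symm⟩, ofReal_zero, zero_mul]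

/- Both sides are the sum of `primePowerWeight q L a ik * f a` over all `a` and `ik`. -/
theorem IsPrimeTransversal.tsum_mul_map_pow_mul_tsum (hq : IsPrimeTransversal q)
    (hL₀ : ∀ a, 0 ≤ L a) (hL : ∀ a b, a ≠ 0 → b ≠ 0 → L (a * b) = L a + L b)
    (hf : Summable fun a ↦ L a * ‖f a‖) :
    (∑' ik : ι × ℕ, (L (q ik.1) : ℂ) * f (q ik.1) ^ (ik.2 + 1)) * ∑' a, f a =
      ∑' a, (L a : ℂ) * f a := by
  have hsummable : Summable fun x : R × (ι × ℕ) ↦ (primePowerWeight q L x.1 x.2 : ℂ) * f x.1 := by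
    refine .of_norm_bounded (hq.hasSum_primePowerWeight_mul_norm hL₀ hL hf).summable fun x ↦ ?_
    rw [norm_mul, norm_real, Real.norm_of_nonneg (primePowerWeight_nonneg hL₀ x.1 x.2)]
  calc (∑' ik : ι × ℕ, (L (q ik.1) : ℂ) * f (q ik.1) ^ (ik.2 + 1)) * ∑' a, f a
      = ∑' (ik : ι × ℕ) (a : R), (primePowerWeight q L a ik : ℂ) * f a := by
        rw [← tsum_mul_right]
        exact tsum_congr fun ik ↦ (hq.tsum_primePowerWeight_mul ik).symm
    _ = ∑' (a : R) (ik : ι × ℕ), (primePowerWeight q L a ik : ℂ) * f a :=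
        Summable.tsum_comm (f := fun a ik ↦ (primePowerWeight q L a ik : ℂ) * f a) hsummable
    _ = ∑' a, (L a : ℂ) * f a := tsum_congr fun a ↦ by
        rcases eq_or_ne a 0 with rfl | ha
        · simp only [map_zero, mul_zero, tsum_zero]
        · rw [tsum_mul_right, ← ofReal_tsum, (hq.hasSum_primePowerWeight hL₀ hL ha).tsum_eq]

end PrimeTransversal

section GaussianPrimes

/-- The rational primes that split in `ℤ[i]`. -/
abbrev SplitPrime := {p : ℕ // p.Prime ∧ p % 4 = 1}

/-- The rational primes that are inert or ramified in `ℤ[i]`. -/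
abbrev NonsplitPrime := {p : ℕ // p.Prime ∧ p % 4 ≠ 1}

theorem NonsplitPrime.mod_four_eq_three (p : NonsplitPrime) (h2 : (p : ℕ) ≠ 2) :
    (p : ℕ) % 4 = 3 := by
  have := p.2.1.eq_two_or_odd
  have := p.2.2
  omega

/-- The Gaussian prime above a rational prime that is inert or ramified. -/
def nonsplitGaussianPrime (p : ℕ) : GaussianInt := if p = 2 then ⟨1, 1⟩ else p

/-- Representatives of the Gaussian primes up to units, where `w p` is a chosen factor of the split
prime `p`. -/
def gaussianPrime (w : ℕ → GaussianInt) : SplitPrime ⊕ SplitPrime ⊕ NonsplitPrime → GaussianInt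
  | .inl p => w p
  | .inr (.inl p) => star (w p)
  | .inr (.inr p) => nonsplitGaussianPrime p

theorem norm_nonsplitGaussianPrime (p : ℕ) :
    (nonsplitGaussianPrime p).norm = if p = 2 then 2 else (p : ℤ) ^ 2 := by
  rw [nonsplitGaussianPrime]
  split_ifs
  · rfl
  · rw [Zsqrtd.norm_natCast, sq]

theorem prime_of_prime_natAbs_norm {α : GaussianInt} (h : α.norm.natAbs.Prime) : Prime α := by
  have : IsLocalHom (Zsqrtd.normMonoidHom : GaussianInt →* ℤ) :=
    ⟨fun α hα ↦ (Zsqrtd.isUnit_iff_norm_isUnit α).mpr hα⟩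
  exact (Irreducible.of_map (f := (Zsqrtd.normMonoidHom : GaussianInt →* ℤ))
    (Int.prime_iff_natAbs_prime.mpr h).irreducible).prime

theorem not_associated_star {α : GaussianInt} {p : ℕ} (hp : p.Prime) (hp2 : p ≠ 2)
    (hα : α.norm = p) : ¬Associated α (star α) := by
  intro h
  have hpZ : Prime (p : ℤ) := Nat.prime_iff_prime_int.mp hp
  have hnorm : α.re * α.re + α.im * α.im = p := by rw [← hα, Zsqrtd.norm_def]; ring
  obtain ⟨β, hβ⟩ : α ∣ ((2 * α.re : ℤ) : GaussianInt) := by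
    convert dvd_add (dvd_refl α) h.dvd using 1
    ext <;> simp [two_mul]
  have hdvd : (p : ℤ) ∣ 2 * α.re := by
    refine (or_self_iff.mp (hpZ.dvd_or_dvd ⟨β.norm, ?_⟩))
    rw [← Zsqrtd.norm_intCast (d := -1), hβ, Zsqrtd.norm_mul, hα]
  obtain ⟨a, ha⟩ : (p : ℤ) ∣ α.re := (hpZ.dvd_or_dvd hdvd).resolve_left fun h2 ↦
    hp2 ((Nat.prime_dvd_prime_iff_eq hp Nat.prime_two).mp (by exact_mod_cast h2))
  obtain ⟨b, hb⟩ : (p : ℤ) ∣ α.im := or_self_iff.mp <| hpZ.dvd_or_dvd <|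
    (Int.dvd_iff_dvd_of_dvd_add ⟨1, by rw [hnorm, mul_one]⟩).mp ⟨a * α.re, by rw [ha]; ring⟩
  refine hpZ.not_isUnit (.of_mul_eq_one (a * a + b * b) (mul_left_cancel₀ hpZ.ne_zero ?_))
  rw [mul_one]
  conv_rhs => rw [← hnorm, ha, hb]
  ring

theorem exists_nat_prime_dvd {π : GaussianInt} (hπ : Prime π) :
    ∃ p : ℕ, p.Prime ∧ π ∣ (p : GaussianInt) := by
  have hdvd : π ∣ (π.norm.natAbs : GaussianInt) := by
    rw [GaussianInt.natCast_natAbs_norm, Zsqrtd.norm_eq_mul_conj]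
    exact dvd_mul_right π (star π)
  have hne : π.norm.natAbs ≠ 0 :=
    Int.natAbs_ne_zero.mpr (GaussianInt.norm_pos.mpr hπ.ne_zero).ne'
  rw [← Nat.prod_primeFactorsList hne, Nat.cast_list_prod, hπ.dvd_prod_iff] at hdvd
  obtain ⟨_, hmem, hdvd⟩ := hdvd
  obtain ⟨p, hp, rfl⟩ := List.mem_map.mp hmem
  exact ⟨p, Nat.prime_of_mem_primeFactorsList hp, hdvd⟩

theorem dvd_nonsplitGaussianPrime {π : GaussianInt} (hπ : Prime π) {p : ℕ}
    (h : π ∣ (p : GaussianInt)) : π ∣ nonsplitGaussianPrime p := by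
  rw [nonsplitGaussianPrime]
  split_ifs with hp
  · have h2 : (p : GaussianInt) = ⟨1, 1⟩ ^ 2 * ⟨0, -1⟩ := by
      subst hp
      rfl
    have hunit : IsUnit (⟨0, -1⟩ : GaussianInt) :=
      (Zsqrtd.norm_eq_one_iff' (by norm_num) _).mp rfl
    rw [h2, hunit.dvd_mul_right] at h
    exact hπ.dvd_of_dvd_pow h
  · exact h

variable {w : ℕ → GaussianInt} (hw : ∀ p : ℕ, p.Prime → p % 4 = 1 → (w p).norm = p)
include hw

theorem prime_gaussianPrime (i : SplitPrime ⊕ SplitPrime ⊕ NonsplitPrime) :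
    Prime (gaussianPrime w i) := by
  rcases i with p | p | p
  · refine prime_of_prime_natAbs_norm ?_
    simpa only [gaussianPrime, hw p p.2.1 p.2.2, Int.natAbs_natCast] using p.2.1
  · refine prime_of_prime_natAbs_norm ?_
    simpa only [gaussianPrime, Zsqrtd.norm_conj, hw p p.2.1 p.2.2, Int.natAbs_natCast] using p.2.1
  · by_cases h2 : (p : ℕ) = 2
    · refine prime_of_prime_natAbs_norm ?_
      rw [gaussianPrime, norm_nonsplitGaussianPrime, if_pos h2]
      exact Nat.prime_two
    · have := Fact.mk p.2.1
      rw [gaussianPrime, nonsplitGaussianPrime, if_neg h2]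
      exact GaussianInt.prime_of_nat_prime_of_mod_four_eq_three p (p.mod_four_eq_three h2)

theorem minFac_natAbs_norm_gaussianPrime (i : SplitPrime ⊕ SplitPrime ⊕ NonsplitPrime) :
    (gaussianPrime w i).norm.natAbs.minFac =
      Sum.elim Subtype.val (Sum.elim Subtype.val Subtype.val) i := by
  rcases i with p | p | p
  · simpa only [gaussianPrime, hw p p.2.1 p.2.2, Int.natAbs_natCast, Sum.elim_inl]
      using p.2.1.minFac_eq
  · simpa only [gaussianPrime, Zsqrtd.norm_conj, hw p p.2.1 p.2.2, Int.natAbs_natCast,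
      Sum.elim_inl, Sum.elim_inr] using p.2.1.minFac_eq
  · simp only [gaussianPrime, norm_nonsplitGaussianPrime, Sum.elim_inr]
    split_ifs with h2
    · simp [h2]
    · rw [Int.natAbs_pow, Int.natAbs_natCast, p.2.1.pow_minFac two_ne_zero]

theorem eq_of_associated_gaussianPrime {i j : SplitPrime ⊕ SplitPrime ⊕ NonsplitPrime}
    (h : Associated (gaussianPrime w i) (gaussianPrime w j)) : i = j := by
  have hij := congrArg (·.natAbs.minFac) (Zsqrtd.norm_eq_of_associated (by norm_num) h)
  simp only [minFac_natAbs_norm_gaussianPrime hw] at hij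
  have hstar (p : SplitPrime) : ¬Associated (w p) (star (w p)) :=
    not_associated_star p.2.1 (by have := p.2.2; omega) (hw p p.2.1 p.2.2)
  rcases i with p | p | p <;> rcases j with q | q | q <;>
    simp only [Sum.elim_inl, Sum.elim_inr] at hij <;> try rw [Subtype.ext hij]
  · exact absurd (Subtype.ext hij ▸ h) (hstar p)
  · exact absurd (hij ▸ p.2.2) q.2.2
  · exact absurd (Subtype.ext hij ▸ h).symm (hstar q)
  · exact absurd (hij ▸ p.2.2) q.2.2
  · exact absurd (hij ▸ q.2.2) p.2.2
  · exact absurd (hij ▸ q.2.2) p.2.2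

theorem isPrimeTransversal_gaussianPrime : IsPrimeTransversal (gaussianPrime w) where
  prime := prime_gaussianPrime hw
  eq_of_associated := eq_of_associated_gaussianPrime hw
  exists_associated {π} hπ := by
    suffices ∃ i, π ∣ gaussianPrime w i from this.imp fun i hi ↦
      ((hπ.dvd_prime_iff_associated (prime_gaussianPrime hw i)).mp hi).symm
    obtain ⟨p, hp, hdvd⟩ := exists_nat_prime_dvd hπ
    by_cases h4 : p % 4 = 1
    · have hnorm : (p : GaussianInt) = w p * star (w p) := by
        rw [← Zsqrtd.norm_eq_mul_conj, hw p hp h4, Int.cast_natCast]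
      rw [hnorm] at hdvd
      rcases hπ.dvd_or_dvd hdvd with h | h
      exacts [⟨.inl ⟨p, hp, h4⟩, h⟩, ⟨.inr (.inl ⟨p, hp, h4⟩), h⟩]
    · exact ⟨.inr (.inr ⟨p, hp, h4⟩), dvd_nonsplitGaussianPrime hπ hdvd⟩

end GaussianPrimes

section LogDerivative

variable (l : ℕ) {s : ℂ}

theorem heckeChar_one (s : ℂ) : heckeChar l s 1 = 1 := by
  simp [heckeChar]

/-- The Hecke character `heckeChar l s` restricted to the Gaussian integers. -/
noncomputable def heckeHom (hs : s ≠ 0) : GaussianInt →*₀ ℂ where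
  toFun α := heckeChar l s α
  map_zero' := by rw [GaussianInt.toComplex_zero, heckeChar_zero l hs]
  map_one' := by rw [GaussianInt.toComplex_one, heckeChar_one]
  map_mul' α β := by rw [GaussianInt.toComplex_mul, heckeChar_mul]

theorem log_gnorm_mul (α β : GaussianInt) (hα : α ≠ 0) (hβ : β ≠ 0) :
    Real.log (gnorm (α * β)) = Real.log (gnorm α) + Real.log (gnorm β) := by
  rw [gnorm, GaussianInt.toComplex_mul, normSq_mul, Real.log_mul]
  exacts [(one_pos.trans_le (one_le_gnorm hα)).ne', (one_pos.trans_le (one_le_gnorm hβ)).ne']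

/-- The sum of `log N(α) * N(α) ^ (-σ)` over the Gaussian integers. -/
noncomputable def logNormSum (σ : ℝ) : ℝ :=
  ∑' α : GaussianInt, Real.log (gnorm α) * gnorm α ^ (-σ)

theorem logNormSum_antitoneOn : AntitoneOn logNormSum (Ioi 1) := fun _ hσ _ hτ hστ ↦
  (summable_log_gnorm_mul_rpow hτ).tsum_le_tsum (fun α ↦
    mul_le_mul_of_nonneg_left (gnorm_rpow_le_rpow (by linarith [mem_Ioi.mp hτ]) (by linarith) α)
      (log_gnorm_nonneg α)) (summable_log_gnorm_mul_rpow hσ)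

theorem summable_log_gnorm_mul_norm_heckeHom (hs : 1 < s.re) (hs0 : s ≠ 0) :
    Summable fun α ↦ Real.log (gnorm α) * ‖heckeHom l hs0 α‖ :=
  (summable_log_gnorm_mul_rpow hs).congr fun α ↦ by
    rw [← norm_heckeChar l (by linarith)]
    rfl

/-- The sum of `Λ(q) * heckeChar l s q` over the powers `q` of the chosen Gaussian primes, where
`Λ` is the von Mangoldt function of `ℤ[i]`; it is the negative of the logarithmic derivative of
`heckeSum l`. -/
noncomputable def vonMangoldtHeckeSum (w : ℕ → GaussianInt) (l : ℕ) (s : ℂ) : ℂ :=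
  ∑' ik : (SplitPrime ⊕ SplitPrime ⊕ NonsplitPrime) × ℕ,
    (Real.log (gnorm (gaussianPrime w ik.1)) : ℂ) *
      heckeChar l s (gaussianPrime w ik.1) ^ (ik.2 + 1)

variable {w : ℕ → GaussianInt} (hw : ∀ p : ℕ, p.Prime → p % 4 = 1 → (w p).norm = p)
include hw

theorem summable_norm_vonMangoldtHeckeSum (hs : 1 < s.re) :
    Summable fun ik : (SplitPrime ⊕ SplitPrime ⊕ NonsplitPrime) × ℕ ↦
      ‖(Real.log (gnorm (gaussianPrime w ik.1)) : ℂ) *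
        heckeChar l s (gaussianPrime w ik.1) ^ (ik.2 + 1)‖ := by
  have hs0 : s ≠ 0 := by rintro rfl; norm_num at hs
  refine ((isPrimeTransversal_gaussianPrime hw).summable_mul_norm_pow log_gnorm_nonneg
    log_gnorm_mul (summable_log_gnorm_mul_norm_heckeHom l hs hs0)).congr fun ik ↦ ?_
  rw [norm_mul, norm_pow, norm_real, Real.norm_of_nonneg (log_gnorm_nonneg _)]
  rfl

theorem norm_vonMangoldtHeckeSum_le (hs : 1 < s.re) :
    ‖vonMangoldtHeckeSum w l s‖ ≤ logNormSum s.re := by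
  have hs0 : s ≠ 0 := by rintro rfl; norm_num at hs
  have hle := (isPrimeTransversal_gaussianPrime hw).tsum_mul_norm_pow_le log_gnorm_nonneg
    log_gnorm_mul (summable_log_gnorm_mul_norm_heckeHom l hs hs0)
  refine (norm_tsum_le_tsum_norm (summable_norm_vonMangoldtHeckeSum l hw hs)).trans ?_
  simp only [norm_mul, norm_pow, norm_real, Real.norm_of_nonneg (log_gnorm_nonneg _)]
  simp only [logNormSum, ← norm_heckeChar l (show s.re ≠ 0 by linarith)]
  exact hle

theorem hasDerivAt_heckeSum_eq_mul (hs : 1 < s.re) :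
    HasDerivAt (heckeSum l) (-(vonMangoldtHeckeSum w l s * heckeSum l s)) s := by
  have hs0 : s ≠ 0 := by rintro rfl; norm_num at hs
  have hmul := (isPrimeTransversal_gaussianPrime hw).tsum_mul_map_pow_mul_tsum log_gnorm_nonneg
    log_gnorm_mul (summable_log_gnorm_mul_norm_heckeHom l hs hs0)
  exact (hasDerivAt_heckeSum l hs).congr_deriv (congrArg Neg.neg hmul.symm)

theorem norm_heckeSum_add_le (hs : 1 < s.re) {b : ℝ} (hb : 0 ≤ b) :
    ‖heckeSum l (s + b)‖ ≤ ‖heckeSum l s‖ * Real.exp (logNormSum s.re * b) := by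
  have hre {t : ℝ} (ht : 0 ≤ t) : s.re ≤ (s + t).re := by simpa using ht
  have hderiv {t : ℝ} (ht : 0 ≤ t) : HasDerivAt (fun t : ℝ ↦ heckeSum l (s + t))
      (-(vonMangoldtHeckeSum w l (s + t) * heckeSum l (s + t))) t := by
    have := (hasDerivAt_heckeSum_eq_mul l hw (hs.trans_le (hre ht))).scomp t
      (ofRealCLM.hasDerivAt.const_add s)
    simpa only [one_smul, ofRealCLM_apply, ofReal_one, Function.comp_def] using this
  have hgronwall := norm_le_gronwallBound_of_norm_deriv_right_le (δ := ‖heckeSum l s‖)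
    (K := logNormSum s.re) (ε := 0) (a := 0) (b := b)
    (fun t ht ↦ (hderiv ht.1).continuousAt.continuousWithinAt)
    (fun t ht ↦ (hderiv ht.1).hasDerivWithinAt) (by simp)
    (fun t ht ↦ by
      rw [norm_neg, norm_mul, add_zero]
      gcongr
      exact (norm_vonMangoldtHeckeSum_le l hw (hs.trans_le (hre ht.1))).trans
        (logNormSum_antitoneOn hs (hs.trans_le (hre ht.1)) (hre ht.1)))
    b ⟨hb, le_rfl⟩
  rwa [gronwallBound_ε0, sub_zero] at hgronwall

end LogDerivative

section LowerBound

variable {l : ℕ} {s : ℂ}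

theorem pow_four_eq_one_of_gnorm_eq_one {α : GaussianInt} (h : gnorm α = 1) : α ^ 4 = 1 := by
  obtain ⟨a, b⟩ := α
  have hab : a ^ 2 + b ^ 2 = 1 := by
    rw [gnorm_eq_intCast, Zsqrtd.norm_def] at h
    have : a * a - -1 * b * b = 1 := by exact_mod_cast h
    linarith
  have ha := abs_le.mp ((sq_le_one_iff_abs_le_one a).mp (by nlinarith))
  have hb := abs_le.mp ((sq_le_one_iff_abs_le_one b).mp (by nlinarith))
  obtain ⟨ha₁, ha₂⟩ := ha
  obtain ⟨hb₁, hb₂⟩ := hb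
  interval_cases a <;> interval_cases b <;> first | rfl | simp at hab

theorem two_le_gnorm {α : GaussianInt} (h0 : α ≠ 0) (h1 : gnorm α ≠ 1) : 2 ≤ gnorm α := by
  rw [gnorm_eq_intCast] at h1 ⊢
  have hpos := GaussianInt.norm_pos.mpr h0
  have hne : α.norm ≠ 1 := by exact_mod_cast h1
  exact_mod_cast (show 2 ≤ α.norm by omega)

theorem one_sub_le_norm_heckeSum (hl : 4 ∣ l) (hs : 2 ≤ s.re) :
    1 - 2 ^ (2 - s.re) * ∑' α : GaussianInt, gnorm α ^ (-2 : ℝ) ≤ ‖heckeSum l s‖ := by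
  classical
  have hsum := hasSum_re (summable_heckeChar l (s := s) (by linarith)).hasSum
  have hminor := (hasSum_ite_eq (1 : GaussianInt) (1 : ℝ)).sub
    ((summable_gnorm_rpow one_lt_two).hasSum.mul_left (2 ^ (2 - s.re)))
  refine (hasSum_le (fun α ↦ ?_) hminor hsum).trans (re_le_norm _)
  have hnonneg : 0 ≤ (2 : ℝ) ^ (2 - s.re) * gnorm α ^ (-2 : ℝ) :=
    mul_nonneg (by positivity) (Real.rpow_nonneg (gnorm_nonneg α) _)
  rcases eq_or_ne α 0 with rfl | h0
  · rw [GaussianInt.toComplex_zero, heckeChar_zero l (by rintro rfl; norm_num at hs),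
      if_neg zero_ne_one, zero_re]
    linarith
  by_cases h1 : gnorm α = 1
  · have hunit : (α : ℂ) ^ 4 = 1 := by
      rw [← map_pow, pow_four_eq_one_of_gnorm_eq_one h1, map_one]
    rw [heckeChar_eq_one_of_pow_four_eq_one l hl hunit, one_re]
    split_ifs <;> linarith
  · have hα : 2 ≤ gnorm α := two_le_gnorm h0 h1
    rw [if_neg (by rintro rfl; exact h1 (by simp [gnorm])), zero_sub]
    refine neg_le_of_abs_le ((abs_re_le_norm _).trans ?_)
    rw [norm_heckeChar l (by linarith), show -s.re = (2 - s.re) + (-2) by ring,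
      Real.rpow_add (by linarith)]
    exact mul_le_mul_of_nonneg_right (Real.rpow_le_rpow_of_nonpos two_pos hα (by linarith))
      (Real.rpow_nonneg (gnorm_nonneg α) _)

theorem exists_half_le_norm_heckeSum :
    ∃ b : ℝ, 0 ≤ b ∧ ∀ l, 4 ∣ l → ∀ s : ℂ, b ≤ s.re → 1 / 2 ≤ ‖heckeSum l s‖ := by
  set S := ∑' α : GaussianInt, gnorm α ^ (-2 : ℝ)
  have hS : 0 ≤ S := tsum_nonneg fun α ↦ Real.rpow_nonneg (gnorm_nonneg α) _
  obtain ⟨n, hn⟩ := pow_unbounded_of_one_lt (2 * S) one_lt_two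
  refine ⟨2 + n, by positivity, fun l hl s hs ↦ ?_⟩
  have hlow := one_sub_le_norm_heckeSum hl (s := s) (by linarith [n.cast_nonneg (α := ℝ)])
  have hpow : (2 : ℝ) ^ (2 - s.re) * S ≤ 1 / 2 :=
    calc (2 : ℝ) ^ (2 - s.re) * S ≤ 2 ^ (-n : ℝ) * S := by gcongr <;> linarith
      _ ≤ 1 / 2 := by
        rw [Real.rpow_neg two_pos.le, Real.rpow_natCast, inv_mul_le_iff₀ (by positivity)]
        linarith
  linarith

theorem exists_norm_eq_prime :
    ∃ w : ℕ → GaussianInt, ∀ p : ℕ, p.Prime → p % 4 = 1 → (w p).norm = p := by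
  have (p : ℕ) : ∃ α : GaussianInt, p.Prime → p % 4 = 1 → α.norm = p := by
    by_cases hp : p.Prime ∧ p % 4 = 1
    · have := Fact.mk hp.1
      obtain ⟨a, b, hab⟩ := Nat.Prime.sq_add_sq (p := p) (by omega)
      refine ⟨⟨a, b⟩, fun _ _ ↦ ?_⟩
      rw [Zsqrtd.norm_def, ← hab]
      push_cast
      ring
    · exact ⟨0, fun h1 h2 ↦ absurd ⟨h1, h2⟩ hp⟩
  choose w hw using this
  exact ⟨w, hw⟩

theorem exists_le_norm_heckeSum : ∃ b : ℝ, ∀ l, 4 ∣ l → ∀ s : ℂ, 1 < s.re →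
    1 / 2 * Real.exp (-(logNormSum s.re * b)) ≤ ‖heckeSum l s‖ := by
  obtain ⟨b, hb, hhalf⟩ := exists_half_le_norm_heckeSum
  obtain ⟨w, hw⟩ := exists_norm_eq_prime
  refine ⟨b, fun l hl s hs ↦ ?_⟩
  rw [Real.exp_neg, ← div_eq_mul_inv, div_le_iff₀ (Real.exp_pos _)]
  refine (hhalf l hl (s + b) ?_).trans (norm_heckeSum_add_le l hw hs hb)
  rw [add_re, ofReal_re]
  linarith

theorem heckeSum_ne_zero (hl : 4 ∣ l) (hs : 1 < s.re) : heckeSum l s ≠ 0 := by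
  obtain ⟨b, hb⟩ := exists_le_norm_heckeSum
  exact norm_pos_iff.mp (lt_of_lt_of_le (by positivity) (hb l hl s hs))

end LowerBound

section PrimeSums

/-- The prime sum `∑ 2 cos(l θ_p) log p / p ^ (1 + u)` over the split primes `p`, where `θ_p` is the
argument of the chosen Gaussian prime factor `w p` of `p`. -/
noncomputable def cosLogSum (w : ℕ → GaussianInt) (l : ℕ) (u : ℝ) : ℝ :=
  ∑' p : SplitPrime,
    2 * Real.cos (l * arg (w p)) * (Real.log (p : ℕ) * ((p : ℕ) : ℝ) ^ (-(1 + u)))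

theorem norm_two_mul_cos_le (x : ℝ) : ‖2 * Real.cos x‖ ≤ 2 := by
  rw [norm_mul, Real.norm_two]
  exact mul_le_of_le_one_right zero_le_two (Real.abs_cos_le_one x)

theorem summable_log_mul_rpow_splitPrime {σ : ℝ} (hσ : 1 < σ) :
    Summable fun p : SplitPrime ↦ Real.log (p : ℕ) * ((p : ℕ) : ℝ) ^ (-σ) :=
  (summable_log_natCast_mul_rpow hσ).comp_injective Subtype.val_injective

theorem summable_cosLogSum (w : ℕ → GaussianInt) (l : ℕ) {u : ℝ} (hu : 0 < u) :
    Summable fun p : SplitPrime ↦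
      2 * Real.cos (l * arg (w p)) * (Real.log (p : ℕ) * ((p : ℕ) : ℝ) ^ (-(1 + u))) := by
  have hsum := summable_log_mul_rpow_splitPrime (show 1 < 1 + u by linarith)
  refine (hsum.norm.mul_left 2).of_norm_bounded fun p ↦ ?_
  rw [norm_mul]
  exact mul_le_mul_of_nonneg_right (norm_two_mul_cos_le _) (norm_nonneg _)

theorem norm_tsum_pow_succ_sub_le {x : ℂ} (hx : ‖x‖ ≤ 1 / 2) :
    ‖∑' k : ℕ, x ^ (k + 1) - x‖ ≤ 2 * ‖x‖ ^ 2 := by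
  have hlow : 1 / 2 ≤ ‖1 - x‖ := by
    have := norm_sub_norm_le 1 x
    rw [norm_one] at this
    linarith
  have hne : 1 - x ≠ 0 := norm_pos_iff.mp (by linarith)
  have hgeom : ∑' k : ℕ, x ^ (k + 1) - x = x ^ 2 * (1 - x)⁻¹ := by
    simp only [pow_succ', tsum_mul_left,
      tsum_geometric_of_norm_lt_one (hx.trans_lt one_half_lt_one)]
    field_simp
    ring
  rw [hgeom, norm_mul, norm_pow, norm_inv, mul_comm]
  gcongr
  exact inv_le_of_inv_le₀ two_pos (by linarith)

theorem tsum_sum_sum {α β : Type*} {f : α ⊕ α ⊕ β → ℂ} (hf : Summable f) :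
    ∑' i, f i = ∑' a, (f (.inl a) + f (.inr (.inl a))) + ∑' b, f (.inr (.inr b)) := by
  have hl := hf.comp_injective Sum.inl_injective
  have hr := hf.comp_injective Sum.inr_injective
  have hrl := hr.comp_injective Sum.inl_injective
  calc ∑' i, f i = ∑' a, f (.inl a) + ∑' c, f (.inr c) := hl.tsum_sum hr
    _ = ∑' a, f (.inl a) + (∑' a, f (.inr (.inl a)) + ∑' b, f (.inr (.inr b))) :=
        congrArg _ (hrl.tsum_sum (hr.comp_injective Sum.inr_injective))
    _ = ∑' a, (f (.inl a) + f (.inr (.inl a))) + ∑' b, f (.inr (.inr b)) := by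
        rw [← add_assoc]
        exact congrArg (· + _) (hl.tsum_add hrl).symm

theorem heckeChar_add_heckeChar_conj (l : ℕ) (σ : ℝ) {z : ℂ} (hz : z ≠ 0) :
    heckeChar l σ z + heckeChar l σ (starRingEnd ℂ z) =
      (2 * Real.cos (l * arg z) * normSq z ^ (-σ) : ℝ) := by
  have hdir : z / ‖z‖ = exp (arg z * I) := by
    rw [div_eq_iff (by simpa using hz), mul_comm, norm_mul_exp_arg_mul_I]
  have hconj : starRingEnd ℂ z / ‖z‖ = exp (-arg z * I) := by
    rw [← conj_ofReal ‖z‖, ← map_div₀, hdir, ← exp_conj, map_mul, conj_ofReal, conj_I, mul_neg,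
      neg_mul]
  rw [heckeChar, heckeChar, norm_conj, normSq_conj, hdir, hconj, ← exp_nat_mul, ← exp_nat_mul]
  push_cast [ofReal_cpow (normSq_nonneg z)]
  rw [two_cos]
  ring_nf

theorem log_gnorm_nonsplitGaussianPrime_mul_inv (p : ℕ) :
    Real.log (gnorm (nonsplitGaussianPrime p)) * (gnorm (nonsplitGaussianPrime p))⁻¹ =
      2 * (Real.log p * (p : ℝ) ^ (-2 : ℝ)) := by
  rw [gnorm_eq_intCast, norm_nonsplitGaussianPrime, Real.rpow_neg (Nat.cast_nonneg _),
    Real.rpow_two]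
  split_ifs with h2
  · rw [h2]
    norm_num
    ring
  · push_cast
    rw [Real.log_pow]
    push_cast
    ring

variable {w : ℕ → GaussianInt} (hw : ∀ p : ℕ, p.Prime → p % 4 = 1 → (w p).norm = p)
include hw

theorem two_le_gnorm_gaussianPrime (i : SplitPrime ⊕ SplitPrime ⊕ NonsplitPrime) :
    2 ≤ gnorm (gaussianPrime w i) :=
  two_le_gnorm (prime_gaussianPrime hw i).ne_zero fun h ↦
    (prime_gaussianPrime hw i).not_isUnit
      (IsUnit.of_pow_eq_one (pow_four_eq_one_of_gnorm_eq_one h) four_ne_zero)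

theorem gaussianPrime_injective : Function.Injective (gaussianPrime w) := fun _ _ h ↦
  eq_of_associated_gaussianPrime hw (h ▸ Associated.refl _)

theorem summable_log_gnorm_gaussianPrime_mul_rpow {σ : ℝ} (hσ : 1 < σ) :
    Summable fun i ↦ Real.log (gnorm (gaussianPrime w i)) * gnorm (gaussianPrime w i) ^ (-σ) :=
  (summable_log_gnorm_mul_rpow hσ).comp_injective (gaussianPrime_injective hw)

theorem tsum_log_gnorm_gaussianPrime_mul_rpow_le {σ : ℝ} (hσ : 1 < σ) :
    ∑' i, Real.log (gnorm (gaussianPrime w i)) * gnorm (gaussianPrime w i) ^ (-σ) ≤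
      logNormSum σ :=
  (summable_log_gnorm_gaussianPrime_mul_rpow hw hσ).tsum_le_tsum_of_inj _
    (gaussianPrime_injective hw)
    (fun α _ ↦ mul_nonneg (log_gnorm_nonneg α) (Real.rpow_nonneg (gnorm_nonneg α) _))
    (fun _ ↦ le_rfl) (summable_log_gnorm_mul_rpow hσ)

theorem norm_heckeChar_gaussianPrime_le (l : ℕ) {s : ℂ} (hs : 1 < s.re)
    (i : SplitPrime ⊕ SplitPrime ⊕ NonsplitPrime) :
    ‖heckeChar l s (gaussianPrime w i)‖ ≤ (gnorm (gaussianPrime w i))⁻¹ := by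
  rw [norm_heckeChar l (by linarith), ← Real.rpow_neg_one]
  exact Real.rpow_le_rpow_of_exponent_le (by linarith [two_le_gnorm_gaussianPrime hw i])
    (by linarith)

theorem summable_log_gnorm_mul_heckeChar_gaussianPrime (l : ℕ) {s : ℂ} (hs : 1 < s.re) :
    Summable fun i ↦
      (Real.log (gnorm (gaussianPrime w i)) : ℂ) * heckeChar l s (gaussianPrime w i) := by
  refine (summable_log_gnorm_gaussianPrime_mul_rpow hw hs).of_norm_bounded fun i ↦ ?_
  rw [norm_mul, norm_real, Real.norm_of_nonneg (log_gnorm_nonneg _),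
    norm_heckeChar l (by linarith)]

theorem norm_vonMangoldtHeckeSum_sub_tsum_le (l : ℕ) {s : ℂ} (hs : 1 < s.re) :
    ‖vonMangoldtHeckeSum w l s - ∑' i,
      (Real.log (gnorm (gaussianPrime w i)) : ℂ) * heckeChar l s (gaussianPrime w i)‖ ≤
      2 * logNormSum 2 := by
  have hall := (summable_norm_vonMangoldtHeckeSum l hw hs).of_norm
  have hprime := summable_log_gnorm_mul_heckeChar_gaussianPrime hw l hs
  have hdom := (summable_log_gnorm_gaussianPrime_mul_rpow hw one_lt_two).mul_left 2
  rw [vonMangoldtHeckeSum, hall.tsum_prod, ← hall.prod.tsum_sub hprime]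
  refine (tsum_of_norm_bounded hdom.hasSum fun i ↦ ?_).trans ?_
  · have hx := norm_heckeChar_gaussianPrime_le hw l hs i
    set x := heckeChar l s (gaussianPrime w i)
    have hhalf : ‖x‖ ≤ 1 / 2 :=
      hx.trans (inv_le_of_inv_le₀ (by norm_num) (by linarith [two_le_gnorm_gaussianPrime hw i]))
    have hsq : ‖x‖ ^ 2 ≤ gnorm (gaussianPrime w i) ^ (-2 : ℝ) := by
      rw [Real.rpow_neg (gnorm_nonneg _), Real.rpow_two, ← inv_pow]
      gcongr
    change ‖∑' k : ℕ, (Real.log (gnorm (gaussianPrime w i)) : ℂ) * x ^ (k + 1) - _‖ ≤ _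
    rw [tsum_mul_left, ← mul_sub, norm_mul, norm_real, Real.norm_of_nonneg (log_gnorm_nonneg _),
      mul_left_comm]
    gcongr
    · exact log_gnorm_nonneg _
    · exact (norm_tsum_pow_succ_sub_le hhalf).trans (by gcongr)
  · rw [tsum_mul_left]
    gcongr
    exact tsum_log_gnorm_gaussianPrime_mul_rpow_le hw one_lt_two

theorem norm_tsum_nonsplitPrime_le (l : ℕ) {s : ℂ} (hs : 1 < s.re) :
    ‖∑' p : NonsplitPrime, (Real.log (gnorm (nonsplitGaussianPrime p)) : ℂ) *
      heckeChar l s (nonsplitGaussianPrime p)‖ ≤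
      ∑' n : ℕ, 2 * (Real.log n * (n : ℝ) ^ (-2 : ℝ)) := by
  have hsum := (summable_log_natCast_mul_rpow one_lt_two).mul_left 2
  have hsub := hsum.comp_injective (Subtype.val_injective (p := fun p : ℕ ↦ p.Prime ∧ p % 4 ≠ 1))
  refine (tsum_of_norm_bounded hsub.hasSum fun p ↦ ?_).trans
    (hsub.tsum_le_tsum_of_inj _ Subtype.val_injective (fun n _ ↦ by positivity)
      (fun _ ↦ le_rfl) hsum)
  rw [norm_mul, norm_real, Real.norm_of_nonneg (log_gnorm_nonneg _), Function.comp_apply,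
    ← log_gnorm_nonsplitGaussianPrime_mul_inv]
  exact mul_le_mul_of_nonneg_left (norm_heckeChar_gaussianPrime_le hw l hs (.inr (.inr p)))
    (log_gnorm_nonneg _)

theorem gnorm_eq_of_splitPrime (p : SplitPrime) : gnorm (w p) = (p : ℕ) := by
  rw [gnorm_eq_intCast, hw p p.2.1 p.2.2, Int.cast_natCast]

theorem tsum_splitPrime_eq_cosLogSum (l : ℕ) {u : ℝ} (hu : 0 < u) :
    ∑' i, (Real.log (gnorm (gaussianPrime w i)) : ℂ) *
        heckeChar l (1 + u : ℝ) (gaussianPrime w i) =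
      cosLogSum w l u + ∑' p : NonsplitPrime, (Real.log (gnorm (nonsplitGaussianPrime p)) : ℂ) *
        heckeChar l (1 + u : ℝ) (nonsplitGaussianPrime p) := by
  have hsum := summable_log_gnorm_mul_heckeChar_gaussianPrime hw l (s := (1 + u : ℝ))
    (by rw [ofReal_re]; linarith)
  rw [tsum_sum_sum hsum, cosLogSum, ofReal_tsum]
  refine congrArg₂ _ (tsum_congr fun p ↦ ?_) rfl
  have hne : (w p : ℂ) ≠ 0 :=
    GaussianInt.toComplex_eq_zero.not.mpr (prime_gaussianPrime hw (.inl p)).ne_zero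
  have hconj : gnorm (star (w p)) = gnorm (w p) := by
    rw [gnorm, GaussianInt.toComplex_star, normSq_conj]
  have hN : normSq (w p : ℂ) = (p : ℕ) := gnorm_eq_of_splitPrime hw p
  simp only [gaussianPrime]
  rw [hconj, ← mul_add, GaussianInt.toComplex_star, heckeChar_add_heckeChar_conj l _ hne,
    gnorm_eq_of_splitPrime hw, hN]
  push_cast
  ring

end PrimeSums

section TrivialFrequency

open ArithmeticFunction.vonMangoldt

theorem exists_norm_vonMangoldtHeckeSum_sub_cosLogSum_le : ∃ C : ℝ, 0 ≤ C ∧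
    ∀ w : ℕ → GaussianInt, (∀ p : ℕ, p.Prime → p % 4 = 1 → (w p).norm = p) → ∀ (l : ℕ) (u : ℝ),
      0 < u → ‖vonMangoldtHeckeSum w l (1 + u : ℝ) - cosLogSum w l u‖ ≤ C := by
  refine ⟨2 * logNormSum 2 + ∑' n : ℕ, 2 * (Real.log n * (n : ℝ) ^ (-2 : ℝ)),
    add_nonneg (mul_nonneg zero_le_two (tsum_nonneg fun α ↦ mul_nonneg (log_gnorm_nonneg α)
      (Real.rpow_nonneg (gnorm_nonneg α) _))) (tsum_nonneg fun n ↦ by positivity),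
    fun w hw l u hu ↦ ?_⟩
  have hs : 1 < ((1 + u : ℝ) : ℂ).re := by rw [ofReal_re]; linarith
  have hprime := norm_vonMangoldtHeckeSum_sub_tsum_le hw l hs
  rw [tsum_splitPrime_eq_cosLogSum hw l hu, ← sub_sub] at hprime
  have htri := norm_add_le_of_le hprime (norm_tsum_nonsplitPrime_le hw l hs)
  rwa [sub_add_cancel] at htri

theorem ofReal_tsum_residueClass_div_rpow {q : ℕ} (a : ZMod q) (x : ℝ) :
    ((∑' n, residueClass a n / (n : ℝ) ^ x : ℝ) : ℂ) =
      LSeries (fun n ↦ residueClass a n) x := by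
  rw [ofReal_tsum]
  refine tsum_congr fun n ↦ ?_
  rw [ofReal_div, ofReal_cpow n.cast_nonneg, ofReal_natCast, LSeries.term]
  split_ifs with hn
  · rw [hn, residueClass_apply_zero, ofReal_zero, zero_div]
  · rfl

theorem exists_tsum_residueClass_div_rpow_le {q : ℕ} [NeZero q] {a : ZMod q} (ha : IsUnit a) :
    ∃ C : ℝ, ∀ x ∈ Ioc (1 : ℝ) 2,
      ∑' n, residueClass a n / (n : ℝ) ^ x ≤ (q.totient : ℝ)⁻¹ / (x - 1) + C := by
  have hcont : ContinuousOn (fun x : ℝ ↦ LFunctionResidueClassAux a x) (Icc 1 2) :=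
    (continuousOn_LFunctionResidueClassAux a).comp continuous_ofReal.continuousOn fun _ hx ↦ hx.1
  obtain ⟨C, hC⟩ := isCompact_Icc.exists_bound_of_continuousOn hcont
  refine ⟨C, fun x hx ↦ ?_⟩
  have hpole : LSeries (fun n ↦ residueClass a n) x =
      ((q.totient : ℝ)⁻¹ / (x - 1) : ℝ) + LFunctionResidueClassAux a x := by
    rw [eqOn_LFunctionResidueClassAux ha (show 1 < (x : ℂ).re from hx.1)]
    push_cast
    ring
  refine (le_abs_self _).trans ?_
  rw [← Real.norm_eq_abs, ← norm_real, ofReal_tsum_residueClass_div_rpow, hpole]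
  refine norm_add_le_of_le ?_ (hC x ⟨hx.1.le, hx.2⟩)
  rw [norm_real, Real.norm_of_nonneg (div_nonneg (by positivity) (by linarith [hx.1]))]

theorem tsum_splitPrime_log_mul_rpow_le {x : ℝ} (hx : 1 < x) :
    ∑' p : SplitPrime, Real.log (p : ℕ) * ((p : ℕ) : ℝ) ^ (-x) ≤
      ∑' n, residueClass (1 : ZMod 4) n / (n : ℝ) ^ x := by
  have hnonneg (n : ℕ) : 0 ≤ residueClass (1 : ZMod 4) n / (n : ℝ) ^ x :=
    div_nonneg (residueClass_nonneg _ n) (by positivity)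
  refine (summable_log_mul_rpow_splitPrime hx).tsum_le_tsum_of_inj _ Subtype.val_injective
    (fun n _ ↦ hnonneg n) (fun p ↦ ?_)
    ((summable_log_natCast_mul_rpow hx).of_nonneg_of_le hnonneg fun n ↦ ?_)
  · have hmod : ((p : ℕ) : ZMod 4) = 1 := by
      simpa using (ZMod.natCast_eq_natCast_iff p 1 4).mpr p.2.2
    rw [residueClass, Set.indicator_of_mem (by exact hmod),
      ArithmeticFunction.vonMangoldt_apply_prime p.2.1, Real.rpow_neg (Nat.cast_nonneg _),
      div_eq_mul_inv]
  · rw [div_eq_mul_inv, ← Real.rpow_neg n.cast_nonneg]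
    gcongr
    exact (residueClass_le _ n).trans ArithmeticFunction.vonMangoldt_le_log

theorem exists_tsum_splitPrime_log_mul_rpow_le : ∃ C : ℝ, 0 ≤ C ∧ ∀ u ∈ Ioc (0 : ℝ) 1,
    ∑' p : SplitPrime, Real.log (p : ℕ) * ((p : ℕ) : ℝ) ^ (-(1 + u)) ≤ 2⁻¹ / u + C := by
  obtain ⟨C, hC⟩ := exists_tsum_residueClass_div_rpow_le (isUnit_one (M := ZMod 4))
  refine ⟨|C|, abs_nonneg C, fun u hu ↦ ?_⟩
  have hle := (tsum_splitPrime_log_mul_rpow_le (show 1 < 1 + u by linarith [hu.1])).trans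
    (hC (1 + u) ⟨by linarith [hu.1], by linarith [hu.2]⟩)
  rw [show Nat.totient 4 = 2 from rfl, add_sub_cancel_left, Nat.cast_two] at hle
  exact hle.trans (by gcongr; exact le_abs_self C)

theorem exists_cosLogSum_zero_le : ∃ C : ℝ, 0 ≤ C ∧
    ∀ w : ℕ → GaussianInt, ∀ u ∈ Ioc (0 : ℝ) 1, cosLogSum w 0 u ≤ 1 / u + C := by
  obtain ⟨C, hC, hle⟩ := exists_tsum_splitPrime_log_mul_rpow_le
  refine ⟨2 * C, by positivity, fun w u hu ↦ ?_⟩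
  simp only [cosLogSum, Nat.cast_zero, zero_mul, Real.cos_zero, mul_one, tsum_mul_left]
  calc 2 * ∑' p : SplitPrime, Real.log (p : ℕ) * ((p : ℕ) : ℝ) ^ (-(1 + u))
      ≤ 2 * (2⁻¹ / u + C) := by
        gcongr
        exact hle u hu
    _ = 1 / u + 2 * C := by ring

end TrivialFrequency

section ZeroRepulsion

variable {l : ℕ}

theorem one_le_log_natCast (hl : 4 ≤ l) : 1 ≤ Real.log l := by
  have : (4 : ℝ) ≤ l := by exact_mod_cast hl
  rw [Real.le_log_iff_exp_le (by linarith)]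
  linarith [Real.exp_one_lt_d9]

theorem ball_subset_halfPlane_inter_ball :
    ball (33 / 32 : ℂ) (6 * (1 / 32)) ⊆ {s | 3 / 4 < s.re} ∩ ball 0 4 := by
  intro s hs
  rw [mem_ball_iff_norm] at hs
  constructor
  · have := (abs_le.mp ((abs_re_le_norm _).trans hs.le)).1
    norm_num at this
    rw [mem_ofPred_eq]
    linarith
  · have := norm_sub_norm_le s (33 / 32)
    rw [mem_ball_zero_iff]
    norm_num at this hs
    linarith

theorem heckeContinuation_ne_zero (hl : 4 ∣ l) (hl1 : 1 ≤ l) {s : ℂ} (hs : 1 < s.re)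
    (hs4 : ‖s‖ ≤ 4) : heckeContinuation l s ≠ 0 := by
  rw [heckeContinuation_eq_heckeSum hl1 hs hs4]
  exact heckeSum_ne_zero hl hs

theorem exists_norm_heckeContinuation_le_exp_mul : ∃ M > 0, ∀ l : ℕ, 4 ∣ l → 4 ≤ l →
    ∀ s ∈ closedBall (33 / 32 : ℂ) (5 * (1 / 32)),
      ‖heckeContinuation l s‖ ≤
        Real.exp (M * Real.log l) * ‖heckeContinuation l (33 / 32)‖ := by
  obtain ⟨C, hC, hupper⟩ := exists_norm_heckeContinuation_le
  obtain ⟨b, hlower⟩ := exists_le_norm_heckeSum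
  set c : ℝ := 1 / 2 * Real.exp (-(logNormSum (33 / 32 : ℂ).re * b))
  have hc : 0 < c := by positivity
  refine ⟨1 + |Real.log (C / c)|, by positivity, fun l hl hl4 s hs ↦ ?_⟩
  have hl1 : 1 ≤ l := by omega
  have hreg := ball_subset_halfPlane_inter_ball (closedBall_subset_ball (by norm_num) hs)
  have hcenter : c ≤ ‖heckeContinuation l (33 / 32)‖ := by
    rw [heckeContinuation_eq_heckeSum hl1 (by norm_num) (by norm_num)]
    exact hlower l hl _ (by norm_num)
  have hlog : Real.log (C / c) + Real.log l ≤ (1 + |Real.log (C / c)|) * Real.log l := by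
    nlinarith [one_le_log_natCast hl4, le_abs_self (Real.log (C / c)),
      abs_nonneg (Real.log (C / c))]
  calc ‖heckeContinuation l s‖ ≤ C * l :=
        hupper l hl1 s hreg.1.le (mem_ball_zero_iff.mp hreg.2).le
    _ = Real.exp (Real.log (C / c) + Real.log l) * c := by
        rw [Real.exp_add, Real.exp_log (by positivity), Real.exp_log (by positivity)]
        field_simp
    _ ≤ _ := by gcongr

theorem logDeriv_heckeContinuation {w : ℕ → GaussianInt}
    (hw : ∀ p : ℕ, p.Prime → p % 4 = 1 → (w p).norm = p) (hl : 4 ∣ l) (hl1 : 1 ≤ l) {s : ℂ}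
    (hs : 1 < s.re) (hs4 : ‖s‖ < 4) :
    logDeriv (heckeContinuation l) s = -vonMangoldtHeckeSum w l s := by
  have hev : heckeContinuation l =ᶠ[𝓝 s] heckeSum l := by
    filter_upwards [(isOpen_lt continuous_const continuous_re).mem_nhds hs,
      (isOpen_lt continuous_norm continuous_const).mem_nhds hs4] with z hz hz4
    exact heckeContinuation_eq_heckeSum hl1 hz (le_of_lt hz4)
  rw [logDeriv_apply, hev.deriv_eq, hev.eq_of_nhds, (hasDerivAt_heckeSum_eq_mul l hw hs).deriv,
    ← neg_mul, mul_div_cancel_right₀ _ (heckeSum_ne_zero hl hs)]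

theorem exists_norm_vonMangoldtHeckeSum_add_le : ∃ K : ℝ, 0 ≤ K ∧ ∀ w : ℕ → GaussianInt,
    (∀ p : ℕ, p.Prime → p % 4 = 1 → (w p).norm = p) → ∀ l : ℕ, 4 ∣ l → 4 ≤ l →
      ∃ Z : Multiset ℂ, (∀ ρ ∈ Z, ρ.re ≤ 1) ∧ ∀ u ∈ Ioc (0 : ℝ) (1 / 32),
        ‖vonMangoldtHeckeSum w l (1 + u : ℝ) +
          (Z.map fun ρ ↦ 1 / (((1 + u : ℝ) : ℂ) - ρ)).sum‖ ≤ K * Real.log l := by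
  obtain ⟨M, hM, hbound⟩ := exists_norm_heckeContinuation_le_exp_mul
  refine ⟨384 * M, by positivity, fun w hw l hl hl4 ↦ ?_⟩
  have hl1 : 1 ≤ l := by omega
  have hlog : 0 < Real.log l := one_pos.trans_le (one_le_log_natCast hl4)
  obtain ⟨Z, hZ, hlandau⟩ := exists_norm_logDeriv_sub_sum_zeros_le (by norm_num) (by positivity)
    ((differentiableOn_heckeContinuation hl1).mono ball_subset_halfPlane_inter_ball)
    (heckeContinuation_ne_zero hl hl1 (by norm_num) (by norm_num)) (hbound l hl hl4)
  refine ⟨Z, fun ρ hρ ↦ ?_, fun u hu ↦ ?_⟩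
  · by_contra! hre
    have hball : ρ ∈ ball (33 / 32 : ℂ) (6 * (1 / 32)) :=
      closedBall_subset_ball (by norm_num) (hZ ρ hρ).1
    exact heckeContinuation_ne_zero hl hl1 hre
      (mem_ball_zero_iff.mp (ball_subset_halfPlane_inter_ball hball).2).le (hZ ρ hρ).2
  · have hs : 1 < ((1 + u : ℝ) : ℂ).re := by rw [ofReal_re]; linarith [hu.1]
    have hs4 : ‖((1 + u : ℝ) : ℂ)‖ < 4 := by
      rw [norm_real, Real.norm_of_nonneg] <;> linarith [hu.1, hu.2]
    have hmem : ((1 + u : ℝ) : ℂ) ∈ closedBall (33 / 32 : ℂ) (1 / 32) := by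
      rw [mem_closedBall_iff_norm, show (33 / 32 : ℂ) = (33 / 32 : ℝ) by push_cast; rfl,
        ← ofReal_sub, norm_real, Real.norm_eq_abs, abs_le]
      constructor <;> linarith [hu.1, hu.2]
    have h := hlandau _ hmem (heckeContinuation_ne_zero hl hl1 hs hs4.le)
    rw [logDeriv_heckeContinuation hw hl hl1 hs hs4, ← neg_add', norm_neg] at h
    exact h.trans_eq (by ring)

theorem exists_abs_cosLogSum_add_poleSum_le : ∃ K : ℝ, 0 ≤ K ∧ ∀ w : ℕ → GaussianInt,
    (∀ p : ℕ, p.Prime → p % 4 = 1 → (w p).norm = p) → ∀ l : ℕ, 4 ∣ l → 4 ≤ l →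
      ∃ Z : Multiset ℂ, (∀ ρ ∈ Z, ρ.re ≤ 1) ∧ ∀ u ∈ Ioc (0 : ℝ) (1 / 32),
        |cosLogSum w l u + poleSum Z u| ≤ K * Real.log l := by
  obtain ⟨K, hK, hlandau⟩ := exists_norm_vonMangoldtHeckeSum_add_le
  obtain ⟨C, hC, happrox⟩ := exists_norm_vonMangoldtHeckeSum_sub_cosLogSum_le
  refine ⟨K + C, add_nonneg hK hC, fun w hw l hl hl4 ↦ ?_⟩
  obtain ⟨Z, hZ, hsum⟩ := hlandau w hw l hl hl4
  refine ⟨Z, hZ, fun u hu ↦ ?_⟩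
  have h := norm_sub_le_of_le (hsum u hu) (happrox w hw l u hu.1)
  rw [add_sub_sub_cancel, add_comm _ (cosLogSum w l u : ℂ)] at h
  have hre := (abs_re_le_norm _).trans h
  rw [add_re, ofReal_re, re_sum_one_div_sub] at hre
  nlinarith [one_le_log_natCast hl4]

theorem three_four_one (w : ℕ → GaussianInt) (l : ℕ) {u : ℝ} (hu : 0 < u) :
    0 ≤ 3 * cosLogSum w 0 u + 4 * cosLogSum w l u + cosLogSum w (2 * l) u := by
  have h (m : ℕ) := (summable_cosLogSum w m hu).hasSum
  rw [cosLogSum, cosLogSum, cosLogSum,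
    ← ((((h 0).mul_left 3).add ((h l).mul_left 4)).add (h (2 * l))).tsum_eq]
  refine tsum_nonneg fun p ↦ ?_
  have hweight : 0 ≤ Real.log (p : ℕ) * ((p : ℕ) : ℝ) ^ (-(1 + u)) := by positivity
  set x := Real.cos (l * arg (w p))
  have hdouble : Real.cos ((2 * l : ℕ) * arg (w p)) = 2 * x ^ 2 - 1 := by
    rw [← Real.cos_two_mul, Nat.cast_mul, Nat.cast_two, mul_assoc]
  rw [hdouble, Nat.cast_zero, zero_mul, Real.cos_zero]
  nlinarith [mul_nonneg (sq_nonneg (x + 1)) hweight]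

theorem exists_abs_cosLogSum_le : ∃ K : ℝ, 0 ≤ K ∧ ∀ w : ℕ → GaussianInt,
    (∀ p : ℕ, p.Prime → p % 4 = 1 → (w p).norm = p) → ∀ l : ℕ, 4 ∣ l → 4 ≤ l →
      ∀ u ∈ Ioc (0 : ℝ) (1 / 32), |cosLogSum w l u| ≤ K * Real.log l := by
  obtain ⟨K, hK, hpole⟩ := exists_abs_cosLogSum_add_poleSum_le
  obtain ⟨C, hC, hzero⟩ := exists_cosLogSum_zero_le
  refine ⟨K + 500 * (C + 2 * K + 4), by positivity, fun w hw l hl hl4 u hu ↦ ?_⟩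
  have hlog := one_le_log_natCast hl4
  have hupper {m : ℕ} (hm : 4 ∣ m) (hm4 : 4 ≤ m) {u : ℝ} (hu : u ∈ Ioc (0 : ℝ) (1 / 32)) :
      cosLogSum w m u ≤ K * Real.log m := by
    obtain ⟨Z, hZ, hb⟩ := hpole w hw m hm hm4
    linarith [(abs_le.mp (hb u hu)).2, poleSum_nonneg hZ hu.1.le]
  have hdouble : Real.log (2 * l : ℕ) ≤ 2 * Real.log l := by
    rw [← Nat.cast_ofNat (R := ℝ), ← Real.log_pow, ← Nat.cast_pow]
    exact Real.log_le_log (by positivity) (by exact_mod_cast (show 2 * l ≤ l ^ 2 by nlinarith))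
  obtain ⟨Z, hZ, hb⟩ := hpole w hw l hl hl4
  have hrepel := poleSum_le_of_forall_le (K := (C + 2 * K + 4) * Real.log l) (u₀ := 1 / 32)
    (by nlinarith) (by norm_num) hZ (fun u hu hu₀ ↦ ?_) hu.1 hu.2
  · have hpos : 0 ≤ 500 * (C + 2 * K + 4) * Real.log l := by positivity
    rw [abs_le]
    constructor <;> nlinarith [(abs_le.mp (hb u hu)).1, hupper hl hl4 hu]
  · have h341 := three_four_one w l hu
    have h0 := hzero w u ⟨hu, by linarith⟩
    have h2l := hupper (hl.mul_left 2) (by omega) ⟨hu, hu₀⟩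
    have hzeros := (abs_le.mp (hb u ⟨hu, hu₀⟩)).2
    calc poleSum Z u ≤ 3 / 4 * (1 / u) + (C * (3 / 4) + 3 / 2 * K * Real.log l) := by nlinarith
      _ ≤ 3 / 4 / u + (C + 2 * K + 4) * Real.log l := by
        rw [mul_one_div]
        gcongr
        nlinarith

end ZeroRepulsion

section AbsCosFourier

/-- The coefficient of `exp (2 n i θ)` in the Fourier series of `|cos θ|`. -/
noncomputable def absCosCoeff (n : ℤ) : ℝ := (-1) ^ n * (2 / Real.pi) / (1 - 4 * (n : ℝ) ^ 2)

theorem absCosCoeff_zero : absCosCoeff 0 = 2 / Real.pi := by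
  simp [absCosCoeff]

theorem abs_absCosCoeff_le {n : ℤ} (hn : n ≠ 0) : |absCosCoeff n| ≤ 1 / (n : ℝ) ^ 2 := by
  have hn2 : 1 ≤ (n : ℝ) ^ 2 := by
    exact_mod_cast Int.add_one_le_iff.mpr (sq_pos_of_ne_zero hn)
  have hpi : 2 / Real.pi ≤ 1 := (div_le_one Real.pi_pos).mpr Real.two_le_pi
  rw [absCosCoeff, abs_div, abs_mul, abs_neg_one_zpow, one_mul,
    abs_of_pos (div_pos two_pos Real.pi_pos), abs_of_neg (by linarith : 1 - 4 * (n : ℝ) ^ 2 < 0)]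
  gcongr
  linarith

theorem summable_absCosCoeff : Summable absCosCoeff := by
  refine .of_norm_bounded_eventually (Real.summable_one_div_int_pow.mpr one_lt_two) ?_
  filter_upwards [(finite_singleton (0 : ℤ)).compl_mem_cofinite] with n hn
  exact abs_absCosCoeff_le hn

theorem integral_exp_mul_I_symm {c : ℂ} (hc : c ≠ 0) (a : ℝ) :
    ∫ x in (-a)..a, exp (c * x * I) = 2 * sin (c * a) / c := by
  have hcI : c * I ≠ 0 := mul_ne_zero hc I_ne_zero
  simp only [mul_right_comm c _ I]
  rw [integral_exp_mul_complex hcI, div_eq_div_iff hcI hc, two_sin]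
  push_cast
  rw [mul_right_comm c I, mul_right_comm c I, mul_neg]
  linear_combination (exp (c * a * I) - exp (-(c * a) * I)) * c * I_sq

theorem sin_one_add_two_mul_int_mul_pi_div_two (m : ℤ) :
    sin ((1 + 2 * m) * (Real.pi / 2 : ℝ)) = (-1) ^ m := by
  have hshift : (1 + 2 * m) * (Real.pi / 2 : ℝ) = m * Real.pi + (Real.pi / 2 : ℂ) := by
    push_cast
    ring
  rw [hshift, sin_add_pi_div_two, ← ofReal_intCast, ← ofReal_mul, ← ofReal_cos,
    Real.cos_int_mul_pi, ofReal_zpow, ofReal_neg, ofReal_one]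

theorem integral_exp_mul_cos (n : ℤ) :
    ∫ x in (-(Real.pi / 2))..(Real.pi / 2), exp (-(2 * n * x * I)) * cos x =
      (Real.pi * absCosCoeff n : ℝ) := by
  have hodd (m : ℤ) : (1 + 2 * m : ℂ) ≠ 0 := by
    exact_mod_cast (show 1 + 2 * m ≠ 0 by omega)
  have hexp (x : ℝ) : exp (-(2 * n * x * I)) * cos x =
      2⁻¹ * (exp ((1 + 2 * (-n : ℤ)) * x * I) + exp (-(1 + 2 * n) * x * I)) := by
    rw [cos, mul_div_assoc', mul_add, ← exp_add, ← exp_add, div_eq_inv_mul]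
    push_cast
    ring_nf
  have hpartial : 1 / (1 + 2 * (-n : ℤ)) + 1 / (1 + 2 * n) = (2 / (1 - 4 * n ^ 2) : ℂ) := by
    rw [div_add_div _ _ (hodd _) (hodd _)]
    push_cast
    ring_nf
  have hpi : (Real.pi : ℂ) ≠ 0 := ofReal_ne_zero.mpr Real.pi_ne_zero
  simp only [hexp, intervalIntegral.integral_const_mul]
  rw [intervalIntegral.integral_add (Continuous.intervalIntegrable (by fun_prop) _ _)
    (Continuous.intervalIntegrable (by fun_prop) _ _), integral_exp_mul_I_symm (hodd _),
    integral_exp_mul_I_symm (neg_ne_zero.mpr (hodd _)), neg_mul, sin_neg,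
    sin_one_add_two_mul_int_mul_pi_div_two, sin_one_add_two_mul_int_mul_pi_div_two, mul_neg,
    neg_div_neg_eq, zpow_neg, ← inv_zpow, inv_neg_one]
  calc 2⁻¹ * (2 * (-1 : ℂ) ^ n / (1 + 2 * (-n : ℤ)) + 2 * (-1) ^ n / (1 + 2 * n))
    _ = (-1) ^ n * (1 / (1 + 2 * (-n : ℤ)) + 1 / (1 + 2 * n)) := by ring
    _ = (Real.pi * absCosCoeff n : ℝ) := by
        rw [hpartial, absCosCoeff]
        push_cast
        field_simp

theorem abs_cos_periodic :
    Function.Periodic (fun θ : ℝ ↦ ((|Real.cos θ| : ℝ) : ℂ)) Real.pi := fun θ ↦ by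
  simp only [Real.cos_add_pi, abs_neg]

/-- The function `|cos θ|` on the circle `ℝ / π ℤ`. -/
noncomputable def absCosCircle : C(AddCircle Real.pi, ℂ) where
  toFun := abs_cos_periodic.lift
  continuous_toFun := continuous_coinduced_dom.mpr <| by
    change Continuous fun θ : ℝ ↦ ((|Real.cos θ| : ℝ) : ℂ)
    fun_prop

theorem absCosCircle_coe (θ : ℝ) : absCosCircle θ = ((|Real.cos θ| : ℝ) : ℂ) := rfl

theorem fourier_pi_coe_apply (n : ℤ) (x : ℝ) :
    fourier n (x : AddCircle Real.pi) = exp (2 * n * x * I) := by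
  rw [fourier_coe_apply]
  congr 1
  field_simp [Real.pi_ne_zero]

theorem fourierCoeff_absCosCircle [Fact (0 < Real.pi)] (n : ℤ) :
    fourierCoeff absCosCircle n = absCosCoeff n := by
  have hpi : (Real.pi : ℂ) ≠ 0 := ofReal_ne_zero.mpr Real.pi_ne_zero
  have hintegral : ∫ x in (-(Real.pi / 2))..(Real.pi / 2),
      (fourier (-n) (x : AddCircle Real.pi) : ℂ) • absCosCircle x =
        ∫ x in (-(Real.pi / 2))..(Real.pi / 2), exp (-(2 * n * x * I)) * cos x := by
    refine intervalIntegral.integral_congr fun x hx ↦ ?_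
    rw [uIcc_of_le (by linarith [Real.pi_pos])] at hx
    simp only [fourier_pi_coe_apply, absCosCircle_coe, smul_eq_mul,
      abs_of_nonneg (Real.cos_nonneg_of_mem_Icc hx), ofReal_cos, Int.cast_neg, mul_neg, neg_mul]
  rw [fourierCoeff_eq_intervalIntegral _ n (-(Real.pi / 2)), neg_add_eq_sub, sub_half, hintegral,
    integral_exp_mul_cos, real_smul]
  push_cast
  field_simp

theorem hasSum_absCosCoeff_mul_cos (θ : ℝ) :
    HasSum (fun n : ℤ ↦ absCosCoeff n * Real.cos (2 * n * θ)) |Real.cos θ| := by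
  have : Fact (0 < Real.pi) := ⟨Real.pi_pos⟩
  have hsummable : Summable (fourierCoeff absCosCircle) := by
    rw [funext fourierCoeff_absCosCircle]
    exact summable_ofReal.mpr summable_absCosCoeff
  have hsum := hasSum_re (has_pointwise_sum_fourier_series_of_summable hsummable θ)
  rw [absCosCircle_coe, ofReal_re] at hsum
  refine hsum.congr_fun fun n ↦ ?_
  rw [fourierCoeff_absCosCircle, fourier_pi_coe_apply, smul_eq_mul, re_ofReal_mul]
  congr 1
  exact_mod_cast (exp_ofReal_mul_I_re (2 * n * θ)).symm

end AbsCosFourier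

section PrimeDirichletSeries

/-- The Dirichlet series `∑ a p / p ^ (1 + u)` over the split primes `p`. -/
noncomputable def primeSeries (a : SplitPrime → ℝ) (u : ℝ) : ℝ :=
  ∑' p : SplitPrime, a p * ((p : ℕ) : ℝ) ^ (-(1 + u))

theorem summable_splitPrime_rpow {σ : ℝ} (hσ : 1 < σ) :
    Summable fun p : SplitPrime ↦ ((p : ℕ) : ℝ) ^ (-σ) :=
  (Real.summable_nat_rpow.mpr (neg_lt_neg hσ)).comp_injective Subtype.val_injective

theorem summable_primeSeries {a : SplitPrime → ℝ} (ha : ∀ p, |a p| ≤ 1) {u : ℝ} (hu : 0 < u) :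
    Summable fun p : SplitPrime ↦ a p * ((p : ℕ) : ℝ) ^ (-(1 + u)) := by
  refine (summable_splitPrime_rpow (show 1 < 1 + u by linarith)).norm.of_norm_bounded fun p ↦ ?_
  rw [norm_mul]
  exact mul_le_of_le_one_left (norm_nonneg _) (ha p)

theorem hasDerivAt_primeSeries {a : SplitPrime → ℝ} (ha : ∀ p, |a p| ≤ 1) {u : ℝ} (hu : 0 < u) :
    HasDerivAt (primeSeries a)
      (-∑' p, a p * (Real.log (p : ℕ) * ((p : ℕ) : ℝ) ^ (-(1 + u)))) u := by
  rw [← tsum_neg]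
  refine hasDerivAt_tsum_of_isPreconnected (t := Ioi (u / 2))
    (g := fun p y ↦ a p * ((p : ℕ) : ℝ) ^ (-(1 + y)))
    (g' := fun p y ↦ -(a p * (Real.log (p : ℕ) * ((p : ℕ) : ℝ) ^ (-(1 + y)))))
    (summable_log_mul_rpow_splitPrime (show 1 < 1 + u / 2 by linarith)) isOpen_Ioi
    isPreconnected_Ioi (fun p y _ ↦ ?_) (fun p y hy ↦ ?_) (half_lt_self hu)
    (summable_primeSeries ha hu) (half_lt_self hu)
  · have hpow := (((hasDerivAt_id y).const_add 1).neg).const_rpow (Nat.cast_pos.mpr p.2.1.pos)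
    exact (hpow.const_mul (a p)).congr_deriv (by simp only [Pi.neg_apply, id]; ring)
  · have := Real.log_natCast_nonneg p
    calc _ ≤ ‖Real.log (p : ℕ) * ((p : ℕ) : ℝ) ^ (-(1 + y))‖ := by
          rw [norm_neg, norm_mul]
          exact mul_le_of_le_one_left (norm_nonneg _) (ha p)
      _ = Real.log (p : ℕ) * ((p : ℕ) : ℝ) ^ (-(1 + y)) :=
          Real.norm_of_nonneg (by positivity)
      _ ≤ Real.log (p : ℕ) * ((p : ℕ) : ℝ) ^ (-(1 + u / 2)) := by
          gcongr
          · exact_mod_cast p.2.1.one_le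
          · exact (mem_Ioi.mp hy).le

theorem exists_abs_primeSeries_cos_sub_le : ∃ K : ℝ, 0 ≤ K ∧ ∀ w : ℕ → GaussianInt,
    (∀ p : ℕ, p.Prime → p % 4 = 1 → (w p).norm = p) → ∀ l : ℕ, 4 ∣ l → 4 ≤ l →
      ∀ u v : ℝ, 0 < u → u ≤ v → v ≤ 1 / 32 →
        |primeSeries (fun p ↦ Real.cos (l * arg (w p))) u -
          primeSeries (fun p ↦ Real.cos (l * arg (w p))) v| ≤ K * Real.log l * v := by
  obtain ⟨K, hK, hT⟩ := exists_abs_cosLogSum_le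
  refine ⟨K, hK, fun w hw l hl hl4 u v hu huv hv ↦ ?_⟩
  have hderiv (y : ℝ) (hy : y ∈ Icc u v) :
      HasDerivWithinAt (primeSeries fun p ↦ Real.cos (l * arg (w p)))
        (-(2⁻¹ * cosLogSum w l y)) (Icc u v) y := by
    refine (hasDerivAt_primeSeries (fun _ ↦ Real.abs_cos_le_one _)
      (hu.trans_le hy.1)).hasDerivWithinAt.congr_deriv ?_
    rw [cosLogSum, ← tsum_mul_left]
    exact congrArg Neg.neg (tsum_congr fun p ↦ by ring)
  have hbound (y : ℝ) (hy : y ∈ Icc u v) : ‖-(2⁻¹ * cosLogSum w l y)‖ ≤ K * Real.log l := by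
    rw [norm_neg, norm_mul, norm_inv, Real.norm_two, Real.norm_eq_abs]
    linarith [hT w hw l hl hl4 y ⟨hu.trans_le hy.1, hy.2.trans hv⟩, abs_nonneg (cosLogSum w l y)]
  calc _ ≤ K * Real.log l * ‖u - v‖ :=
        (convex_Icc u v).norm_image_sub_le_of_norm_hasDerivWithin_le hderiv hbound
          (right_mem_Icc.mpr huv) (left_mem_Icc.mpr huv)
    _ ≤ K * Real.log l * v := by
        have := Real.log_natCast_nonneg l
        gcongr
        rw [Real.norm_eq_abs, abs_le]
        constructor <;> linarith

theorem exists_primeSeries_one_sub_le : ∃ C : ℝ, 0 ≤ C ∧ ∀ u v : ℝ, 0 < u → u ≤ v → v ≤ 1 →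
    primeSeries 1 u - primeSeries 1 v ≤ 2⁻¹ * (Real.log v - Real.log u) + C := by
  obtain ⟨C, hC, hT⟩ := exists_tsum_splitPrime_log_mul_rpow_le
  refine ⟨C, hC, fun u v hu huv hv ↦ ?_⟩
  have hderiv (y : ℝ) (hy : y ∈ Icc u v) :=
    ((hasDerivAt_primeSeries (a := 1) (by simp) (hu.trans_le hy.1)).add
      ((Real.hasDerivAt_log (hu.trans_le hy.1).ne').const_mul 2⁻¹)).add
        ((hasDerivAt_id y).const_mul C)
  have hmono : MonotoneOn (fun y ↦ primeSeries 1 y + 2⁻¹ * Real.log y + C * y) (Icc u v) := by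
    refine monotoneOn_of_hasDerivWithinAt_nonneg (convex_Icc u v)
      (fun y hy ↦ (hderiv y hy).continuousAt.continuousWithinAt)
      (fun y hy ↦ (hderiv y (interior_subset hy)).hasDerivWithinAt) fun y hy ↦ ?_
    have hy := interior_subset hy
    have := hT y ⟨hu.trans_le hy.1, hy.2.trans hv⟩
    simp only [Pi.one_apply, one_mul, mul_one]
    rw [div_eq_mul_inv] at this
    linarith
  have := hmono (left_mem_Icc.mpr huv) (right_mem_Icc.mpr huv) huv
  simp only at this
  nlinarith

theorem exists_primeSeries_one_le : ∃ C : ℝ, ∀ u ∈ Ioc (0 : ℝ) 1,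
    primeSeries 1 u ≤ 2⁻¹ * -Real.log u + C := by
  obtain ⟨C, -, hC⟩ := exists_primeSeries_one_sub_le
  refine ⟨C + primeSeries 1 1, fun u hu ↦ ?_⟩
  have := hC u 1 hu.1 hu.2 le_rfl
  rw [Real.log_one] at this
  linarith

theorem le_mul_exp_neg_add {a t : ℝ} (ha : a ≤ 1) (ht : 0 ≤ t) (ht1 : t ≤ 1) :
    a ≤ a * Real.exp (-t) + Real.exp 1 * (t * Real.exp (-t)) := by
  have hle : Real.exp (-t) ≤ 1 := Real.exp_le_one_iff.mpr (neg_nonpos.mpr ht)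
  have hge : 1 ≤ Real.exp 1 * Real.exp (-t) := by
    rw [← Real.exp_add]
    exact Real.one_le_exp (by linarith)
  have hchain : a * (1 - Real.exp (-t)) ≤ t * (Real.exp 1 * Real.exp (-t)) :=
    calc a * (1 - Real.exp (-t)) ≤ 1 - Real.exp (-t) := mul_le_of_le_one_left (by linarith) ha
      _ ≤ t := by linarith [Real.add_one_le_exp (-t)]
      _ ≤ t * (Real.exp 1 * Real.exp (-t)) := le_mul_of_one_le_right ht hge
  linarith

theorem div_le_mul_rpow_add {a n δ : ℝ} (ha : a ≤ 1) (hn : 1 ≤ n) (hδ : 0 ≤ δ)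
    (hδn : δ * Real.log n ≤ 1) :
    a / n ≤ a * n ^ (-(1 + δ)) + Real.exp 1 * δ * (Real.log n * n ^ (-(1 + δ))) := by
  have hn0 : 0 < n := zero_lt_one.trans_le hn
  have hpow : n ^ (-(1 + δ)) = Real.exp (-(δ * Real.log n)) / n := by
    rw [neg_add, Real.rpow_add hn0, Real.rpow_neg_one, Real.rpow_def_of_pos hn0, inv_mul_eq_div]
    ring_nf
  calc a / n ≤ (a * Real.exp (-(δ * Real.log n)) +
        Real.exp 1 * (δ * Real.log n * Real.exp (-(δ * Real.log n)))) / n := by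
        gcongr
        exact le_mul_exp_neg_add ha (mul_nonneg hδ (Real.log_nonneg hn)) hδn
    _ = _ := by
        rw [hpow]
        ring

theorem exists_sum_div_le_primeSeries : ∃ C : ℝ, ∀ a : SplitPrime → ℝ, (∀ p, a p ∈ Icc 0 1) →
    ∀ x : ℝ, Real.exp 1 ≤ x → ∀ s : Finset SplitPrime, (∀ p ∈ s, ((p : ℕ) : ℝ) ≤ x) →
      ∑ p ∈ s, a p / (p : ℕ) ≤ primeSeries a (1 / Real.log x) + C := by
  obtain ⟨C, hC, hT⟩ := exists_tsum_splitPrime_log_mul_rpow_le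
  refine ⟨Real.exp 1 * (1 + C), fun a ha x hx s hs ↦ ?_⟩
  have hx0 : 0 < x := (Real.exp_pos 1).trans_le hx
  have hlog : 1 ≤ Real.log x := (Real.le_log_iff_exp_le hx0).mpr hx
  set δ := 1 / Real.log x with hδ
  have hδ0 : 0 < δ := by positivity
  have hδ1 : δ ≤ 1 := (div_le_one (by linarith)).mpr hlog
  have ha1 (p : SplitPrime) : |a p| ≤ 1 := (abs_of_nonneg (ha p).1).trans_le (ha p).2
  have hterm (p : SplitPrime) (hp : p ∈ s) : a p / (p : ℕ) ≤ a p * ((p : ℕ) : ℝ) ^ (-(1 + δ)) +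
      Real.exp 1 * δ * (Real.log (p : ℕ) * ((p : ℕ) : ℝ) ^ (-(1 + δ))) := by
    refine div_le_mul_rpow_add (ha p).2 (by exact_mod_cast p.2.1.one_le) hδ0.le ?_
    rw [hδ, one_div, inv_mul_le_one₀ (by linarith)]
    exact Real.log_le_log (by exact_mod_cast p.2.1.pos) (hs p hp)
  calc ∑ p ∈ s, a p / (p : ℕ)
    _ ≤ ∑ p ∈ s, a p * ((p : ℕ) : ℝ) ^ (-(1 + δ)) + Real.exp 1 * δ *
        ∑ p ∈ s, Real.log (p : ℕ) * ((p : ℕ) : ℝ) ^ (-(1 + δ)) := by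
      rw [Finset.mul_sum, ← Finset.sum_add_distrib]
      exact Finset.sum_le_sum hterm
    _ ≤ primeSeries a δ + Real.exp 1 * δ * (2⁻¹ / δ + C) := by
      gcongr
      · exact (summable_primeSeries ha1 hδ0).sum_le_tsum s fun p _ ↦
          mul_nonneg (ha p).1 (by positivity)
      · exact ((summable_log_mul_rpow_splitPrime (by linarith)).sum_le_tsum s fun p _ ↦
          mul_nonneg (Real.log_natCast_nonneg _) (by positivity)).trans (hT δ ⟨hδ0, hδ1⟩)
    _ ≤ primeSeries a δ + Real.exp 1 * (1 + C) := by
      rw [mul_assoc, mul_add, mul_div_cancel₀ _ hδ0.ne']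
      gcongr
      · norm_num
      · exact mul_le_of_le_one_left hC hδ1

end PrimeDirichletSeries

section AbsCosSeries

theorem cos_two_mul_int_mul (n : ℤ) (k : ℕ) (θ : ℝ) :
    Real.cos (2 * n * (k * θ)) = Real.cos ((2 * n.natAbs * k : ℕ) * θ) := by
  push_cast [Nat.cast_natAbs]
  rcases abs_choice (n : ℝ) with h | h <;> rw [h]
  · ring_nf
  · rw [← Real.cos_neg]
    ring_nf

theorem hasSum_primeSeries_sub {a : SplitPrime → ℝ} (ha : ∀ p, |a p| ≤ 1) {u v : ℝ} (hu : 0 < u)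
    (hv : 0 < v) :
    HasSum (fun p : SplitPrime ↦ a p * (((p : ℕ) : ℝ) ^ (-(1 + u)) - ((p : ℕ) : ℝ) ^ (-(1 + v))))
      (primeSeries a u - primeSeries a v) := by
  simp only [mul_sub]
  exact (summable_primeSeries ha hu).hasSum.sub (summable_primeSeries ha hv).hasSum

theorem hasSum_absCosCoeff_mul_primeSeries_sub (w : ℕ → GaussianInt) (k : ℕ) {u v : ℝ}
    (hu : 0 < u) (hv : 0 < v) :
    HasSum (fun n : ℤ ↦ absCosCoeff n *
        (primeSeries (fun p ↦ Real.cos ((2 * n.natAbs * k : ℕ) * arg (w p))) u -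
          primeSeries (fun p ↦ Real.cos ((2 * n.natAbs * k : ℕ) * arg (w p))) v))
      (primeSeries (fun p ↦ |Real.cos (k * arg (w p))|) u -
        primeSeries (fun p ↦ |Real.cos (k * arg (w p))|) v) := by
  set b : SplitPrime → ℝ := fun p ↦ ((p : ℕ) : ℝ) ^ (-(1 + u)) - ((p : ℕ) : ℝ) ^ (-(1 + v))
  have hbsum : Summable b :=
    (summable_splitPrime_rpow (by linarith)).sub (summable_splitPrime_rpow (by linarith))
  have hsummable : Summable fun z : SplitPrime × ℤ ↦
      absCosCoeff z.2 * (Real.cos ((2 * z.2.natAbs * k : ℕ) * arg (w z.1)) * b z.1) := by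
    refine .of_norm_bounded (hbsum.abs.mul_of_nonneg summable_absCosCoeff.abs
      (fun _ ↦ abs_nonneg _) fun _ ↦ abs_nonneg _) fun z ↦ ?_
    rw [Real.norm_eq_abs, abs_mul, abs_mul, mul_comm]
    gcongr
    exact mul_le_of_le_one_left (abs_nonneg _) (Real.abs_cos_le_one _)
  have hcol (p : SplitPrime) : HasSum (fun n : ℤ ↦
      absCosCoeff n * (Real.cos ((2 * n.natAbs * k : ℕ) * arg (w p)) * b p))
      (|Real.cos (k * arg (w p))| * b p) := by
    refine ((hasSum_absCosCoeff_mul_cos (k * arg (w p))).mul_right (b p)).congr_fun fun n ↦ ?_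
    rw [← mul_assoc, cos_two_mul_int_mul]
  have hrow (n : ℤ) := (hasSum_primeSeries_sub
    (a := fun p ↦ Real.cos ((2 * n.natAbs * k : ℕ) * arg (w p)))
    (fun _ ↦ Real.abs_cos_le_one _) hu hv).mul_left (absCosCoeff n)
  have htotal : ∑' z : SplitPrime × ℤ,
      absCosCoeff z.2 * (Real.cos ((2 * z.2.natAbs * k : ℕ) * arg (w z.1)) * b z.1) =
        primeSeries (fun p ↦ |Real.cos (k * arg (w p))|) u -
          primeSeries (fun p ↦ |Real.cos (k * arg (w p))|) v :=
    (hsummable.hasSum.prod_fiberwise hcol).unique <| hasSum_primeSeries_sub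
      (fun _ ↦ (abs_abs _).trans_le (Real.abs_cos_le_one _)) hu hv
  rw [← htotal, ← (Equiv.prodComm ℤ SplitPrime).tsum_eq]
  exact ((Equiv.prodComm ℤ SplitPrime).summable_iff.mpr hsummable).hasSum.prod_fiberwise hrow

theorem log_two_mul_mul_mul_le {m M v : ℝ} (hm : 1 ≤ m) (hM : 0 < M) (hv : v ≤ 1)
    (hMv : Real.log M * v ≤ 1) : Real.log (2 * m * M) * v ≤ 4 * m ^ (1 / 2 : ℝ) := by
  have hpow : 1 ≤ m ^ (1 / 2 : ℝ) := Real.one_le_rpow hm (by norm_num)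
  have hlogm : Real.log m ≤ m ^ (1 / 2 : ℝ) / (1 / 2) :=
    Real.log_le_rpow_div (by linarith) (by norm_num)
  have hlog2 : Real.log 2 ≤ 1 := Real.log_two_lt_d9.le.trans (by norm_num)
  have hnonneg : 0 ≤ Real.log 2 + Real.log m :=
    add_nonneg (Real.log_nonneg one_le_two) (Real.log_nonneg hm)
  rw [Real.log_mul (by positivity) hM.ne', Real.log_mul two_ne_zero (by positivity), add_mul]
  linarith [mul_le_of_le_one_right hnonneg hv]

theorem log_natAbs_mul_div_sq_le {n : ℤ} (hn : n ≠ 0) {k : ℕ} (hk : 0 < k) {v : ℝ} (hv : v ≤ 1)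
    (hkv : Real.log k * v ≤ 1) :
    1 / (n : ℝ) ^ 2 * (Real.log (2 * n.natAbs * k : ℕ) * v) ≤ 4 * |(n : ℝ)| ^ (-(3 / 2) : ℝ) := by
  have hn1 : 1 ≤ |(n : ℝ)| := by exact_mod_cast Int.one_le_abs hn
  have hn0 : 0 < |(n : ℝ)| := by linarith
  have hpow : |(n : ℝ)| ^ (-(3 / 2) : ℝ) = 1 / (n : ℝ) ^ 2 * |(n : ℝ)| ^ (1 / 2 : ℝ) := by
    rw [← sq_abs, ← Real.rpow_natCast, one_div, ← Real.rpow_neg hn0.le, ← Real.rpow_add hn0]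
    norm_num
  push_cast [Nat.cast_natAbs]
  rw [hpow, mul_left_comm 4]
  exact mul_le_mul_of_nonneg_left
    (log_two_mul_mul_mul_le hn1 (by exact_mod_cast hk) hv hkv) (by positivity)

theorem exists_primeSeries_abs_cos_sub_le : ∃ C : ℝ, ∀ w : ℕ → GaussianInt,
    (∀ p : ℕ, p.Prime → p % 4 = 1 → (w p).norm = p) → ∀ k : ℕ, 0 < k → 2 ∣ k →
      ∀ u v : ℝ, 0 < u → u ≤ v → v ≤ 1 / 32 → Real.log k * v ≤ 1 →
        primeSeries (fun p ↦ |Real.cos (k * arg (w p))|) u -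
          primeSeries (fun p ↦ |Real.cos (k * arg (w p))|) v ≤
            2 / Real.pi * (primeSeries 1 u - primeSeries 1 v) + C := by
  obtain ⟨K, hK, hS⟩ := exists_abs_primeSeries_cos_sub_le
  refine ⟨∑' n : ℤ, K * (4 * |(n : ℝ)| ^ (-(3 / 2) : ℝ)), ?_⟩
  intro w hw k hk hk2 u v hu huv hv hkv
  have hv0 : 0 < v := hu.trans_le huv
  have hmajorant : Summable fun n : ℤ ↦ K * (4 * |(n : ℝ)| ^ (-(3 / 2) : ℝ)) :=
    ((Real.summable_abs_int_rpow (by norm_num)).mul_left 4).mul_left K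
  refine hasSum_le (fun n ↦ ?_) (hasSum_absCosCoeff_mul_primeSeries_sub w k hu hv0)
    ((hasSum_ite_eq 0 (2 / Real.pi * (primeSeries 1 u - primeSeries 1 v))).add hmajorant.hasSum)
  rcases eq_or_ne n 0 with rfl | hn
  · simp only [absCosCoeff_zero, Int.natAbs_zero, mul_zero, zero_mul, Nat.cast_zero, Real.cos_zero,
      if_true]
    exact le_add_of_nonneg_right (by positivity)
  · have hl4 : 4 ∣ 2 * n.natAbs * k := by
      rw [mul_right_comm]
      exact (mul_dvd_mul_left 2 hk2).mul_right _
    have hlpos : 0 < 2 * n.natAbs * k := by positivity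
    rw [if_neg hn, zero_add]
    calc _ ≤ |absCosCoeff n| * |_| := (le_abs_self _).trans_eq (abs_mul _ _)
      _ ≤ 1 / (n : ℝ) ^ 2 * (K * Real.log (2 * n.natAbs * k : ℕ) * v) := by
        gcongr
        · exact abs_absCosCoeff_le hn
        · exact hS w hw _ hl4 (Nat.le_of_dvd hlpos hl4) u v hu huv hv
      _ = K * (1 / (n : ℝ) ^ 2 * (Real.log (2 * n.natAbs * k : ℕ) * v)) := by ring
      _ ≤ K * (4 * |(n : ℝ)| ^ (-(3 / 2) : ℝ)) := by
        exact mul_le_mul_of_nonneg_left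
          (log_natAbs_mul_div_sq_le hn hk (by linarith) hkv) hK

theorem primeSeries_abs_cos_le_one (w : ℕ → GaussianInt) (k : ℕ) {u : ℝ} (hu : 0 < u) :
    primeSeries (fun p ↦ |Real.cos (k * arg (w p))|) u ≤ primeSeries 1 u := by
  have hsummable := summable_primeSeries (a := fun p ↦ |Real.cos (k * arg (w p))|)
    (fun _ ↦ (abs_abs _).trans_le (Real.abs_cos_le_one _)) hu
  refine hsummable.tsum_le_tsum (fun p ↦ ?_) (summable_primeSeries (by simp) hu)
  exact mul_le_mul_of_nonneg_right (Real.abs_cos_le_one _) (by positivity)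

-- Averaging `|cos|` gains the factor `2 / π` only where `log p` exceeds `64 log k`; on the smaller
-- primes the trivial bound is used.
theorem exists_primeSeries_abs_cos_le : ∃ C : ℝ, ∀ w : ℕ → GaussianInt,
    (∀ p : ℕ, p.Prime → p % 4 = 1 → (w p).norm = p) → ∀ k : ℕ, 0 < k → 2 ∣ k →
      ∀ u ∈ Ioc (0 : ℝ) 1, primeSeries (fun p ↦ |Real.cos (k * arg (w p))|) u ≤
        1 / Real.pi * -Real.log u + (1 / 2 - 1 / Real.pi) * Real.log (Real.log k) + C := by
  obtain ⟨C₁, hC₁⟩ := exists_primeSeries_abs_cos_sub_le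
  obtain ⟨C₂, hC₂, hsub⟩ := exists_primeSeries_one_sub_le
  obtain ⟨C₃, hC₃⟩ := exists_primeSeries_one_le
  refine ⟨|C₁| + 2 / Real.pi * C₂ + C₃ + (1 / 2 - 1 / Real.pi) * Real.log 64,
    fun w hw k hk hk2 u hu ↦ ?_⟩
  have hpi : 0 ≤ 1 / 2 - 1 / Real.pi :=
    sub_nonneg.mpr (one_div_le_one_div_of_le two_pos Real.two_le_pi)
  have hlogk : 1 / 2 ≤ Real.log k :=
    (by linarith [Real.log_two_gt_d9] : 1 / 2 ≤ Real.log 2).trans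
      (Real.log_le_log two_pos (by exact_mod_cast Nat.le_of_dvd hk hk2))
  set v := 1 / (64 * Real.log k) with hv
  have hv0 : 0 < v := by positivity
  have hlogv : -Real.log v = Real.log 64 + Real.log (Real.log k) := by
    rw [hv, one_div, Real.log_inv, neg_neg, Real.log_mul (by norm_num) (by positivity)]
  have hv32 : v ≤ 1 / 32 := one_div_le_one_div_of_le (by norm_num) (by linarith)
  suffices primeSeries (fun p ↦ |Real.cos (k * arg (w p))|) u ≤ 1 / Real.pi * -Real.log u +
      (1 / 2 - 1 / Real.pi) * -Real.log v + (|C₁| + 2 / Real.pi * C₂ + C₃) by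
    rw [hlogv] at this
    linarith
  have hpos : 0 ≤ 2 / Real.pi * C₂ := by positivity
  rcases le_total u v with huv | hvu
  · have hkv : Real.log k * v ≤ 1 := by
      rw [hv, mul_one_div, div_le_one (by positivity)]
      linarith
    have hdiff := hC₁ w hw k hk hk2 u v hu.1 huv hv32 hkv
    have htrivial := (primeSeries_abs_cos_le_one w k hv0).trans (hC₃ v ⟨hv0, by linarith⟩)
    have hone := mul_le_mul_of_nonneg_left (hsub u v hu.1 huv (by linarith))
      (show 0 ≤ 2 / Real.pi by positivity)
    have hC₁abs := le_abs_self C₁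
    ring_nf at hdiff htrivial hone ⊢
    linarith
  · have htrivial := (primeSeries_abs_cos_le_one w k hu.1).trans (hC₃ u hu)
    have hlog := mul_le_mul_of_nonneg_left (Real.log_le_log hv0 hvu) hpi
    linarith [abs_nonneg C₁]

end AbsCosSeries

end GaussianPrimeAngle

theorem sum_abs_cos_over_primes_bound_general :
    ∃ C : ℝ, ∀ xp yp : ℕ → ℤ,
      (∀ p : ℕ, p.Prime → p % 4 = 1 → (p : ℤ) = xp p ^ 2 + yp p ^ 2) →
      ∀ k : ℕ, 0 < k → 2 ∣ k → ∀ x : ℝ, Real.exp 1 ≤ x →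
        ∑ p ∈ (Finset.range (⌊x⌋₊ + 1)).filter (fun p => p.Prime ∧ p % 4 = 1),
            |Real.cos ((k : ℝ) * Complex.arg ((xp p : ℂ) + (yp p : ℂ) * Complex.I))| / (p : ℝ) ≤
          (1 / Real.pi) * Real.log (Real.log x) +
            (1 / 2 - 1 / Real.pi) * Real.log (Real.log k) + C := by
  obtain ⟨C₁, hcutoff⟩ := GaussianPrimeAngle.exists_sum_div_le_primeSeries
  obtain ⟨C₂, hseries⟩ := GaussianPrimeAngle.exists_primeSeries_abs_cos_le
  refine ⟨C₁ + C₂, fun xp yp hrep k hk hk2 x hx ↦ ?_⟩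
  have hx0 : 0 < x := (Real.exp_pos 1).trans_le hx
  have hlog : 1 ≤ Real.log x := (Real.le_log_iff_exp_le hx0).mpr hx
  let w : ℕ → GaussianInt := fun p ↦ ⟨xp p, yp p⟩
  have hw (p : ℕ) (hp : p.Prime) (hp4 : p % 4 = 1) : (w p).norm = p := by
    rw [Zsqrtd.norm_def, hrep p hp hp4]
    ring
  have hsum := hcutoff (fun p ↦ |Real.cos (k * Complex.arg (w p))|)
    (fun _ ↦ ⟨abs_nonneg _, Real.abs_cos_le_one _⟩) x hx
    ((Finset.range (⌊x⌋₊ + 1)).subtype fun p ↦ p.Prime ∧ p % 4 = 1) fun p hp ↦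
      (Nat.le_floor_iff hx0.le).mp (Finset.mem_range_succ_iff.mp (Finset.mem_subtype.mp hp))
  have hbound := hseries w hw k hk hk2 (1 / Real.log x)
    ⟨by positivity, (div_le_one (by positivity)).mpr hlog⟩
  have hloglog : -Real.log (1 / Real.log x) = Real.log (Real.log x) := by
    rw [one_div, Real.log_inv, neg_neg]
  simp only [w, GaussianInt.toComplex_def', hloglog] at hsum hbound
  rw [← Finset.sum_subtype_eq_sum_filter]
  linarith

/-- Average bound on `|cos(k θ_p)|` over primes `p ≡ 1 (mod 4)`: for `4 ∣ k`, `k > 0`,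
and `log k ≤ b √(log x)`, one has
`Σ_{p ≤ x, p ≡ 1 (4)} |cos(k θ_p)|/p ≤ (1/π) log log x + (1 - 2/π) log log k + C`,
where `θ_p` is the argument of a Gaussian prime factor `x_p + i y_p` of `p`. -/
theorem sum_abs_cos_over_primes_bound :
    ∃ b > (0 : ℝ), ∃ C : ℝ,
      ∀ xp yp : ℕ → ℤ,
        (∀ p : ℕ, p.Prime → p % 4 = 1 → (p : ℤ) = xp p ^ 2 + yp p ^ 2) →
        ∀ k : ℕ, 0 < k → 4 ∣ k →
          ∀ x : ℝ, 16 ≤ x → Real.log k ≤ b * Real.sqrt (Real.log x) →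
            ∑ p ∈ (Finset.range (⌊x⌋₊ + 1)).filter (fun p => p.Prime ∧ p % 4 = 1),
                |Real.cos ((k : ℝ) *
                  Complex.arg ((xp p : ℂ) + (yp p : ℂ) * Complex.I))| / (p : ℝ) ≤
              (1 / Real.pi) * Real.log (Real.log x) +
                (1 - 2 / Real.pi) * Real.log (Real.log k) + C := by
  obtain ⟨C, hC⟩ := sum_abs_cos_over_primes_bound_general
  refine ⟨1, one_pos, C, fun xp yp hrep k hk hk4 x hx _ ↦ ?_⟩
  have hbound := hC xp yp hrep k hk ((show 2 ∣ 4 by decide).trans hk4) x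
    (by linarith [Real.exp_one_lt_d9])
  have hloglog : 0 ≤ Real.log (Real.log k) :=
    Real.log_nonneg (GaussianPrimeAngle.one_le_log_natCast (Nat.le_of_dvd hk hk4))
  have hpi : 1 / 2 - 1 / Real.pi ≤ 1 - 2 / Real.pi := by
    linarith [(div_le_one Real.pi_pos).mpr Real.two_le_pi, mul_one_div 2 Real.pi]
  exact hbound.trans (by gcongr)
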